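/- arXiv:1508.00606 — 2 statements merged into one kernel-verified Lean document; each statement's English description precedes it below -/
import Mathlib

section
/- Let n ≥ 1 and p ∈ [2,∞], and let B̃_pⁿ denote the unit ball of ℓ_pⁿ (the set {x ∈ ℝⁿ : Σ|x_i|^p ≤ 1}, respectively {x : max|x_i| ≤ 1} for p = ∞) rescaled by a homothety to have Lebesgue volume 1, and let λ_{B̃_pⁿ} denote the uniform (Lebesgue) probability measure on B̃_pⁿ. Then for every k ≥ 1, λ_k^Lip(B̃_pⁿ, |·|, λ_{B̃_pⁿ}) ≥ (1/392)·λ_k^Lip(ℝⁿ,|·|,γⁿ), where B̃_pⁿ is endowed with the restriction of the Euclidean distance |·|. -/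
open MeasureTheory Filter Topology ENNReal Pointwise

/-- The local Lipschitz constant `|∇f|(x) = limsup_{y→x} |f(y)-f(x)|/d(y,x)`
(equal to `0` at isolated points, by the convention `Real.sInf ∅ = 0`). -/
noncomputable def localLip {Ω : Type*} [PseudoMetricSpace Ω] (f : Ω → ℝ) (x : Ω) : ℝ :=
  Filter.limsup (fun y => |f y - f x| / dist y x) (nhdsWithin x {x}ᶜ)

/-- Membership in the metric Sobolev space `W^{1,2}_Lip(Ω,d,μ)`. -/
def memW12Lip {Ω : Type*} [PseudoMetricSpace Ω] [MeasurableSpace Ω]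
    (μ : Measure Ω) (f : Ω → ℝ) : Prop :=
  LocallyLipschitz f ∧
    (∫⁻ x, ENNReal.ofReal ((f x) ^ 2) ∂μ) + (∫⁻ x, ENNReal.ofReal ((localLip f x) ^ 2) ∂μ) < ⊤

/-- The `k`-th metric eigenvalue `λ_k^Lip(Ω,d,μ)`: the infimum over `k`-dimensional
linear subspaces `F ⊆ W^{1,2}_Lip` of the supremum of the Rayleigh quotient over `F`. -/
noncomputable def lambdaLip {Ω : Type*} [PseudoMetricSpace Ω] [MeasurableSpace Ω]
    (μ : Measure Ω) (k : ℕ) : ℝ :=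
  sInf { a : ℝ | ∃ F : Submodule ℝ (Ω → ℝ), Module.finrank ℝ F = k ∧
    (∀ f ∈ F, memW12Lip μ f) ∧
    a = sSup { r : ℝ | ∃ f ∈ F, (∫ x, (f x) ^ 2 ∂μ) ≠ 0 ∧
      r = (∫ x, (localLip f x) ^ 2 ∂μ) / (∫ x, (f x) ^ 2 ∂μ) } }

/-- The standard Gaussian probability measure `γⁿ` on `ℝⁿ`, with density proportional
to `exp(-|x|²/2)` with respect to Lebesgue measure, normalized to total mass one. -/
noncomputable def stdGaussian (n : ℕ) : Measure (EuclideanSpace ℝ (Fin n)) :=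
  ((volume.withDensity fun x : EuclideanSpace ℝ (Fin n) =>
      ENNReal.ofReal (Real.exp (-‖x‖ ^ 2 / 2))) Set.univ)⁻¹ •
    volume.withDensity fun x : EuclideanSpace ℝ (Fin n) =>
      ENNReal.ofReal (Real.exp (-‖x‖ ^ 2 / 2))

/-- The unit ball of `ℓ_pⁿ` inside Euclidean space, for `p ∈ [1,∞]`:
`{x : ∑ᵢ |xᵢ|^p ≤ 1}` for finite `p`, and `{x : ∀ i, |xᵢ| ≤ 1}` for `p = ∞`. -/
noncomputable def lpUnitBall (n : ℕ) (p : ℝ≥0∞) : Set (EuclideanSpace ℝ (Fin n)) :=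
  if p = ∞ then {x | ∀ i, |x i| ≤ 1} else {x | ∑ i, |x i| ^ p.toReal ≤ 1}

/-!
An `L`-Lipschitz map that pushes `μ` to `ν` pulls test spaces for `ν` back to test spaces for `μ`
and multiplies energies by at most `L²`, so `λ_k(μ) ≤ L² λ_k(ν)`. It remains to transport the
Gaussian measure to the uniform measure on the normalized `ℓ_p` ball by a `14`-Lipschitz map
(Latała–Wojtaszczyk). For `p = ∞` the Gaussian distribution function, applied to every coordinate,
is such a map. For `p < ∞`, first apply to every coordinate the monotone transport `w` of the
Gaussian to the density proportional to `exp (-|y|^p)`, and then the radial transport `y ↦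
K(‖y‖_p^p) • y` of the product density to the ball. The comparison of Gaussian and `exp (-|y|^p)`
tails shows that `w` is `3`-Lipschitz and that `|w|^(p/2)` is `(7/2)√p`-Lipschitz. Since `‖y‖_p^p`
is the squared Euclidean norm of the vector of the `|y i|^(p/2)`, the second bound controls the
variation of the factor `K`.
-/

section LocalLip

variable {X Y ι : Type*} [PseudoMetricSpace X] [PseudoMetricSpace Y] {f : Y → ℝ}

theorem localLip_nonneg (f : Y → ℝ) (y : Y) : 0 ≤ localLip f y := by
  rcases (𝓝[{y}ᶜ] y).eq_or_neBot with isolated | _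
  · simp [localLip, isolated, limsup, limsSup]
  · rw [localLip, limsup_eq]
    refine Real.sInf_nonneg fun a ha => ?_
    obtain ⟨z, hz⟩ := ha.out.exists
    exact le_trans (by positivity) hz

theorem localLip_le_of_eventually {y : Y} {b : ℝ} (hb : 0 ≤ b)
    (h : ∀ᶠ z in 𝓝 y, |f z - f y| ≤ b * dist z y) : localLip f y ≤ b := by
  rcases (𝓝[{y}ᶜ] y).eq_or_neBot with isolated | _
  · simpa [localLip, isolated, limsup, limsSup] using hb
  · refine limsup_le_of_le (isCoboundedUnder_le_of_le _ (x := 0) fun z => by positivity) ?_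
    filter_upwards [nhdsWithin_le_nhds h] with z hz
    exact div_le_of_le_mul₀ dist_nonneg hb hz

theorem eventually_le_of_localLip_lt (hf : LocallyLipschitz f) {y : Y} {b : ℝ}
    (hb : localLip f y < b) : ∀ᶠ z in 𝓝 y, |f z - f y| ≤ b * dist z y := by
  obtain ⟨K, t, ht, hK⟩ := hf y
  have lip_on_t : ∀ z ∈ t, |f z - f y| ≤ K * dist z y := fun z hz => by
    simpa only [Real.dist_eq] using hK.dist_le_mul z hz y (mem_of_mem_nhds ht)
  have quotient_bdd : ∀ᶠ z in 𝓝[{y}ᶜ] y, |f z - f y| / dist z y ≤ K := by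
    filter_upwards [nhdsWithin_le_nhds ht] with z hz
    exact div_le_of_le_mul₀ dist_nonneg K.2 (lip_on_t z hz)
  have quotient_lt : ∀ᶠ z in 𝓝[{y}ᶜ] y, |f z - f y| / dist z y < b :=
    eventually_lt_of_limsup_lt hb ⟨K, eventually_map.2 quotient_bdd⟩
  filter_upwards [eventually_nhdsWithin_iff.1 quotient_lt, ht] with z hz hzt
  rcases dist_nonneg.eq_or_lt' (a := dist z y) with h0 | hpos
  · simpa only [h0, mul_zero] using lip_on_t z hzt
  · exact ((div_lt_iff₀ hpos).1 (hz fun h => hpos.ne' (by rw [h, dist_self]))).le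

theorem isClosed_setOf_ball_lipschitz (hf : Continuous f) (b δ : ℝ) :
    IsClosed {y | ∀ z, dist z y < δ → |f z - f y| ≤ b * dist z y} := by
  rw [← isSeqClosed_iff_isClosed]
  intro u y hu hy z hz
  have dist_tendsto : Tendsto (fun j => dist z (u j)) atTop (𝓝 (dist z y)) :=
    tendsto_const_nhds.dist hy
  refine le_of_tendsto_of_tendsto (tendsto_const_nhds.sub ((hf.tendsto y).comp hy)).abs
    (dist_tendsto.const_mul b) ?_
  filter_upwards [dist_tendsto.eventually (gt_mem_nhds hz)] with j hj
  exact hu j z hj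

theorem localLip_lt_iff_exists_rat (hf : LocallyLipschitz f) {y : Y} {a : ℝ} :
    localLip f y < a ↔ ∃ b : ℚ, (0 ≤ (b : ℝ) ∧ (b : ℝ) < a) ∧ ∃ m : ℕ,
      ∀ z, dist z y < 1 / ((m : ℝ) + 1) → |f z - f y| ≤ b * dist z y := by
  constructor
  · intro h
    obtain ⟨b, hfb, hba⟩ := exists_rat_btwn h
    obtain ⟨ε, hε, h_ball⟩ := Metric.eventually_nhds_iff.1 (eventually_le_of_localLip_lt hf hfb)
    obtain ⟨m, hm⟩ := exists_nat_one_div_lt hε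
    exact ⟨b, ⟨(localLip_nonneg f y).trans hfb.le, hba⟩, m, fun z hz => h_ball (hz.trans hm)⟩
  · rintro ⟨b, ⟨hb0, hba⟩, m, h⟩
    refine (localLip_le_of_eventually hb0 ?_).trans_lt hba
    exact Metric.eventually_nhds_iff.2 ⟨1 / ((m : ℝ) + 1), by positivity, fun z hz => h z hz⟩

theorem measurable_localLip [MeasurableSpace Y] [OpensMeasurableSpace Y]
    (hf : LocallyLipschitz f) : Measurable (localLip f) := by
  refine measurable_of_Iio fun a => ?_
  simp only [Set.preimage, Set.mem_Iio, localLip_lt_iff_exists_rat hf, Set.ofPred_exists,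
    Set.ofPred_and]
  refine .iUnion fun b => ((MeasurableSet.const _).inter (.const _)).inter (.iUnion fun m => ?_)
  exact (isClosed_setOf_ball_lipschitz hf.continuous b _).measurableSet

theorem localLip_comp_le {T : X → Y} {L : NNReal} (hT : LipschitzWith L T)
    (hf : LocallyLipschitz f) (x : X) : localLip (f ∘ T) x ≤ L * localLip f (T x) := by
  have le_of_pos : ∀ ε > 0, localLip (f ∘ T) x ≤ L * (localLip f (T x) + ε) := fun ε hε => by
    have slope_nonneg := localLip_nonneg f (T x)
    refine localLip_le_of_eventually (by positivity) ?_
    filter_upwards [(hT.continuous.tendsto x).eventually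
      (eventually_le_of_localLip_lt hf (lt_add_of_pos_right _ hε))] with z hz
    calc |f (T z) - f (T x)| ≤ (localLip f (T x) + ε) * dist (T z) (T x) := hz
      _ ≤ (localLip f (T x) + ε) * (L * dist z x) := by gcongr; exact hT.dist_le_mul z x
      _ = L * (localLip f (T x) + ε) * dist z x := by ring
  have limit : Tendsto (fun ε : ℝ => L * (localLip f (T x) + ε)) (𝓝[>] 0)
      (𝓝 (L * (localLip f (T x) + 0))) :=
    Continuous.tendsto (by fun_prop) 0 |>.mono_left nhdsWithin_le_nhds
  simpa only [add_zero] using ge_of_tendsto limit (eventually_nhdsWithin_of_forall le_of_pos)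

theorem localLip_comp_sq_le (hT : LipschitzWith L T) (hf : LocallyLipschitz f) (x : X) :
    localLip (f ∘ T) x ^ 2 ≤ L ^ 2 * localLip f (T x) ^ 2 := by
  rw [← mul_pow]
  exact pow_le_pow_left₀ (localLip_nonneg _ _) (localLip_comp_le hT hf x) 2

theorem localLip_sum_smul_le [Fintype ι] (c : ι → ℝ) {b : ι → Y → ℝ}
    (hb : ∀ i, LocallyLipschitz (b i)) (y : Y) :
    localLip (∑ i, c i • b i) y ≤ ∑ i, |c i| * localLip (b i) y := by
  have le_of_pos : ∀ ε > 0,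
      localLip (∑ i, c i • b i) y ≤ ∑ i, |c i| * (localLip (b i) y + ε) := fun ε hε => by
    refine localLip_le_of_eventually (Finset.sum_nonneg fun i _ =>
      mul_nonneg (abs_nonneg _) (add_nonneg (localLip_nonneg _ _) hε.le)) ?_
    filter_upwards [eventually_all.2 fun i =>
      eventually_le_of_localLip_lt (hb i) (lt_add_of_pos_right (localLip (b i) y) hε)] with z hz
    simp only [Finset.sum_apply, Pi.smul_apply, smul_eq_mul]
    rw [← Finset.sum_sub_distrib, Finset.sum_mul]
    refine (Finset.abs_sum_le_sum_abs _ _).trans (Finset.sum_le_sum fun i _ => ?_)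
    rw [← mul_sub, abs_mul, mul_assoc]
    exact mul_le_mul_of_nonneg_left (hz i) (abs_nonneg _)
  have limit : Tendsto (fun ε : ℝ => ∑ i, |c i| * (localLip (b i) y + ε)) (𝓝[>] 0)
      (𝓝 (∑ i, |c i| * (localLip (b i) y + 0))) :=
    Continuous.tendsto (by fun_prop) 0 |>.mono_left nhdsWithin_le_nhds
  simpa only [add_zero] using ge_of_tendsto limit (eventually_nhdsWithin_of_forall le_of_pos)

theorem exists_forall_localLip_le [CompactSpace Y] (hf : LocallyLipschitz f) :
    ∃ C : ℝ, ∀ y, localLip f y ≤ C := by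
  have locally_bdd : ∀ y : Y, ∃ t ∈ 𝓝 y, ∃ C : ℝ, ∀ z ∈ t, localLip f z ≤ C := fun y => by
    obtain ⟨K, t, ht, hK⟩ := hf y
    refine ⟨interior t, interior_mem_nhds.2 ht, K, fun z hz => ?_⟩
    refine localLip_le_of_eventually K.2 ?_
    filter_upwards [mem_interior_iff_mem_nhds.1 hz] with x hx
    simpa only [Real.dist_eq] using hK.dist_le_mul x hx z (interior_subset hz)
  choose t ht C hC using locally_bdd
  obtain ⟨s, hs⟩ := CompactSpace.elim_nhds_subcover t ht
  obtain ⟨D, hD⟩ := (s.image C).exists_le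
  refine ⟨D, fun y => ?_⟩
  obtain ⟨z, hzs, hyz⟩ := Set.mem_iUnion₂.1 (hs.ge (Set.mem_univ y))
  exact (hC z y hyz).trans (hD _ (Finset.mem_image_of_mem C hzs))

end LocalLip

section Sobolev

variable {X Y : Type*} [MeasurableSpace X] [PseudoMetricSpace Y] [MeasurableSpace Y]
  {μ : Measure X} {ν : Measure Y} {f : Y → ℝ} {T : X → Y} {L : NNReal}

theorem memW12Lip_of_locallyLipschitz [CompactSpace Y] [IsFiniteMeasure ν]
    (hf : LocallyLipschitz f) : memW12Lip ν f := by
  have lintegral_lt_top_of_bdd : ∀ g : Y → ℝ, (∃ C, ∀ y, g y ≤ C) →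
      ∫⁻ y, ENNReal.ofReal (g y) ∂ν < ⊤ := by
    rintro g ⟨C, hC⟩
    refine (lintegral_mono fun y => ENNReal.ofReal_le_ofReal (hC y)).trans_lt ?_
    rw [lintegral_const]
    exact ENNReal.mul_lt_top ofReal_lt_top (measure_lt_top _ _)
  obtain ⟨C, hC⟩ := exists_forall_localLip_le hf
  obtain ⟨D, hD⟩ := (isCompact_range (hf.continuous.pow 2)).bddAbove
  refine ⟨hf, ENNReal.add_lt_top.2
    ⟨lintegral_lt_top_of_bdd _ ⟨D, fun y => hD (Set.mem_range_self y)⟩,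
      lintegral_lt_top_of_bdd _ ⟨C ^ 2, fun y => ?_⟩⟩⟩
  exact pow_le_pow_left₀ (localLip_nonneg f y) (hC y) 2

variable [OpensMeasurableSpace Y]

theorem memW12Lip.integrable_sq (hf : memW12Lip ν f) : Integrable (fun y => f y ^ 2) ν := by
  refine ⟨(hf.1.continuous.measurable.pow_const 2).aestronglyMeasurable, ?_⟩
  rw [hasFiniteIntegral_iff_ofReal (.of_forall fun y => sq_nonneg _)]
  exact (ENNReal.add_lt_top.1 hf.2).1

theorem memW12Lip.integrable_localLip_sq (hf : memW12Lip ν f) :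
    Integrable (fun y => localLip f y ^ 2) ν := by
  refine ⟨((measurable_localLip hf.1).pow_const 2).aestronglyMeasurable, ?_⟩
  rw [hasFiniteIntegral_iff_ofReal (.of_forall fun y => sq_nonneg _)]
  exact (ENNReal.add_lt_top.1 hf.2).2

theorem memW12Lip.memLp_two (hf : memW12Lip ν f) : MemLp f 2 ν :=
  (memLp_two_iff_integrable_sq hf.1.continuous.measurable.aestronglyMeasurable).2 hf.integrable_sq

theorem memW12Lip.eq_zero_of_integral_sq_eq_zero [ν.IsOpenPosMeasure] (hf : memW12Lip ν f)
    (h0 : ∫ y, f y ^ 2 ∂ν = 0) : f = 0 := by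
  have sq_ae_zero :=
    (integral_eq_zero_iff_of_nonneg (fun y => sq_nonneg (f y)) hf.integrable_sq).1 h0
  refine (Continuous.ae_eq_iff_eq ν hf.1.continuous continuous_const).1 ?_
  filter_upwards [sq_ae_zero] with y hy
  exact pow_eq_zero_iff two_ne_zero |>.1 hy

theorem memW12Lip.integral_comp_sq_eq (hf : memW12Lip ν f) (hTμ : MeasurePreserving T μ ν) :
    ∫ x, f (T x) ^ 2 ∂μ = ∫ y, f y ^ 2 ∂ν := by
  rw [← hTμ.map_eq, integral_map hTμ.measurable.aemeasurable]
  exact (hf.1.continuous.measurable.pow_const 2).aestronglyMeasurable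

variable [PseudoMetricSpace X]

theorem memW12Lip.comp_measurePreserving (hf : memW12Lip ν f) (hT : LipschitzWith L T)
    (hTμ : MeasurePreserving T μ ν) : memW12Lip μ (f ∘ T) := by
  obtain ⟨f_fin, df_fin⟩ := ENNReal.add_lt_top.1 hf.2
  refine ⟨hf.1.comp hT.locallyLipschitz, ENNReal.add_lt_top.2 ⟨?_, ?_⟩⟩
  · exact (hTμ.lintegral_comp
      (hf.1.continuous.measurable.pow_const 2).ennreal_ofReal).trans_lt f_fin
  · calc ∫⁻ x, ENNReal.ofReal (localLip (f ∘ T) x ^ 2) ∂μ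
        ≤ ∫⁻ x, ENNReal.ofReal (L ^ 2) * ENNReal.ofReal (localLip f (T x) ^ 2) ∂μ := by
          gcongr with x
          rw [← ENNReal.ofReal_mul (by positivity)]
          exact ENNReal.ofReal_le_ofReal (localLip_comp_sq_le hT hf.1 x)
      _ = ENNReal.ofReal (L ^ 2) * ∫⁻ y, ENNReal.ofReal (localLip f y ^ 2) ∂ν := by
          rw [lintegral_const_mul' _ _ ofReal_ne_top,
            ← hTμ.lintegral_comp ((measurable_localLip hf.1).pow_const 2).ennreal_ofReal]
      _ < ⊤ := ENNReal.mul_lt_top ofReal_lt_top df_fin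

theorem memW12Lip.integral_localLip_comp_sq_le (hf : memW12Lip ν f) (hT : LipschitzWith L T)
    (hTμ : MeasurePreserving T μ ν) :
    ∫ x, localLip (f ∘ T) x ^ 2 ∂μ ≤ L ^ 2 * ∫ y, localLip f y ^ 2 ∂ν := by
  have meas : AEStronglyMeasurable (fun y => localLip f y ^ 2) (μ.map T) :=
    ((measurable_localLip hf.1).pow_const 2).aestronglyMeasurable
  calc ∫ x, localLip (f ∘ T) x ^ 2 ∂μ ≤ ∫ x, L ^ 2 * localLip f (T x) ^ 2 ∂μ :=
        integral_mono_of_nonneg (.of_forall fun x => sq_nonneg _)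
          (((hTμ.integrable_comp (hTμ.map_eq ▸ meas)).2 hf.integrable_localLip_sq).const_mul _)
          (.of_forall fun x => localLip_comp_sq_le hT hf.1 x)
    _ = L ^ 2 * ∫ y, localLip f y ^ 2 ∂ν := by
        rw [integral_const_mul, ← hTμ.map_eq, integral_map hTμ.measurable.aemeasurable meas]

end Sobolev

section Eigenvalue

variable {X Y : Type*} [PseudoMetricSpace X] [MeasurableSpace X]
  [PseudoMetricSpace Y] [MeasurableSpace Y]
  {μ : Measure X} {ν : Measure Y} {F : Submodule ℝ (Y → ℝ)} {T : X → Y} {L : NNReal}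

/-- The values on `F` of the Rayleigh quotient `∫ |∇f|² dν / ∫ f² dν`, whose supremum is the
quantity minimized by `lambdaLip`. -/
def rayleighQuotients (ν : Measure Y) (F : Submodule ℝ (Y → ℝ)) : Set ℝ :=
  {r | ∃ f ∈ F, ∫ y, f y ^ 2 ∂ν ≠ 0 ∧ r = (∫ y, localLip f y ^ 2 ∂ν) / ∫ y, f y ^ 2 ∂ν}

theorem sSup_rayleighQuotients_nonneg (ν : Measure Y) (F : Submodule ℝ (Y → ℝ)) :
    0 ≤ sSup (rayleighQuotients ν F) := by
  refine Real.sSup_nonneg ?_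
  rintro r ⟨f, -, -, rfl⟩
  exact div_nonneg (integral_nonneg fun y => sq_nonneg _) (integral_nonneg fun y => sq_nonneg _)

theorem lambdaLip_nonneg (ν : Measure Y) (k : ℕ) : 0 ≤ lambdaLip ν k := by
  refine Real.sInf_nonneg ?_
  rintro a ⟨F, -, -, rfl⟩
  exact sSup_rayleighQuotients_nonneg ν F

theorem lambdaLip_le_sSup_rayleighQuotients (hF : ∀ f ∈ F, memW12Lip ν f) :
    lambdaLip ν (Module.finrank ℝ F) ≤ sSup (rayleighQuotients ν F) := by
  refine csInf_le ⟨0, ?_⟩ ⟨F, rfl, hF, rfl⟩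
  rintro a ⟨G, -, -, rfl⟩
  exact sSup_rayleighQuotients_nonneg ν G

variable [OpensMeasurableSpace Y]

theorem integral_localLip_sum_smul_sq_le {ι : Type*} [Fintype ι] (c : ι → ℝ) {b : ι → Y → ℝ}
    (hb : ∀ i, memW12Lip ν (b i)) :
    ∫ y, localLip (∑ i, c i • b i) y ^ 2 ∂ν ≤
      Fintype.card ι * ∑ i, c i ^ 2 * ∫ y, localLip (b i) y ^ 2 ∂ν := by
  have integrable_term : ∀ i, Integrable (fun y => c i ^ 2 * localLip (b i) y ^ 2) ν :=
    fun i => (hb i).integrable_localLip_sq.const_mul _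
  calc ∫ y, localLip (∑ i, c i • b i) y ^ 2 ∂ν
      ≤ ∫ y, Fintype.card ι * ∑ i, c i ^ 2 * localLip (b i) y ^ 2 ∂ν := by
        refine integral_mono_of_nonneg (.of_forall fun y => sq_nonneg _)
          ((integrable_finsetSum _ fun i _ => integrable_term i).const_mul _)
          (.of_forall fun y => ?_)
        refine (pow_le_pow_left₀ (localLip_nonneg _ y)
          (localLip_sum_smul_le c (fun i => (hb i).1) y) 2).trans ?_
        simpa only [mul_pow, sq_abs, Finset.card_univ] using sq_sum_le_card_mul_sum_sq
          (s := Finset.univ) (f := fun i => |c i| * localLip (b i) y)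
    _ = Fintype.card ι * ∑ i, c i ^ 2 * ∫ y, localLip (b i) y ^ 2 ∂ν := by
        rw [integral_const_mul, integral_finsetSum _ fun i _ => integrable_term i]
        simp only [integral_const_mul]

variable [ν.IsOpenPosMeasure]

theorem exists_sq_repr_le_mul_integral_sq {ι : Type*} [Finite ι] (b : Module.Basis ι ℝ F)
    (hF : ∀ f ∈ F, memW12Lip ν f) :
    ∃ K : ℝ, ∀ (f : F) (i : ι), b.repr f i ^ 2 ≤ K * ∫ y, f.1 y ^ 2 ∂ν := by
  cases nonempty_fintype ι
  let toL2 : F →ₗ[ℝ] Lp ℝ 2 ν :=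
    { toFun := fun f => (hF f.1 f.2).memLp_two.toLp f.1
      map_add' := fun f g => rfl
      map_smul' := fun c f => rfl }
  have norm_toL2_sq : ∀ f : F, ‖toL2 f‖ ^ 2 = ∫ y, f.1 y ^ 2 ∂ν := fun f => by
    rw [← real_inner_self_eq_norm_sq, L2.inner_def]
    refine integral_congr_ae ?_
    filter_upwards [(hF f.1 f.2).memLp_two.coeFn_toLp] with y hy
    rw [real_inner_self_eq_norm_sq, Real.norm_eq_abs, sq_abs]
    exact congrArg (· ^ 2) hy
  have ker_eq_bot : LinearMap.ker (toL2 ∘ₗ b.equivFun.symm.toLinearMap) = ⊥ := by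
    refine LinearMap.ker_eq_bot'.2 fun c hc => b.equivFun.symm.map_eq_zero_iff.1 ?_
    refine Subtype.ext ((hF _ (b.equivFun.symm c).2).eq_zero_of_integral_sq_eq_zero ?_)
    rw [← norm_toL2_sq, show toL2 (b.equivFun.symm c) = 0 from hc, norm_zero, zero_pow two_ne_zero]
  obtain ⟨K, -, hK⟩ := (toL2 ∘ₗ b.equivFun.symm.toLinearMap).exists_antilipschitzWith ker_eq_bot
  refine ⟨K ^ 2, fun f i => ?_⟩
  have norm_coord_le : ‖b.equivFun f‖ ≤ K * ‖toL2 f‖ := by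
    simpa using hK.le_mul_dist (b.equivFun f) 0
  rw [← norm_toL2_sq, ← mul_pow, ← sq_abs]
  exact pow_le_pow_left₀ (abs_nonneg _) ((norm_le_pi_norm (b.equivFun f) i).trans norm_coord_le) 2

theorem bddAbove_rayleighQuotients [FiniteDimensional ℝ F] (hF : ∀ f ∈ F, memW12Lip ν f) :
    BddAbove (rayleighQuotients ν F) := by
  let b := Module.finBasis ℝ F
  obtain ⟨K, hK⟩ := exists_sq_repr_le_mul_integral_sq b hF
  let n : ℝ := Fintype.card (Fin (Module.finrank ℝ F))
  refine ⟨n * ∑ i, K * ∫ y, localLip (b i).1 y ^ 2 ∂ν, ?_⟩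
  rintro r ⟨f, hf, f_ne, rfl⟩
  have f_eq_sum : f = ∑ i, b.repr ⟨f, hf⟩ i • (b i).1 := by
    simpa only [map_sum, map_smul, Submodule.subtype_apply] using
      (congrArg F.subtype (b.sum_repr ⟨f, hf⟩)).symm
  rw [div_le_iff₀ (f_ne.symm.lt_of_le (integral_nonneg fun y => sq_nonneg _)), mul_assoc,
    Finset.sum_mul]
  calc ∫ y, localLip f y ^ 2 ∂ν
      ≤ n * ∑ i, b.repr ⟨f, hf⟩ i ^ 2 * ∫ y, localLip (b i).1 y ^ 2 ∂ν := by
        conv_lhs => rw [f_eq_sum]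
        exact integral_localLip_sum_smul_sq_le _ fun i => hF _ (b i).2
    _ ≤ n * ∑ i, (K * ∫ y, localLip (b i).1 y ^ 2 ∂ν) * ∫ y, f y ^ 2 ∂ν := by
        refine mul_le_mul_of_nonneg_left (Finset.sum_le_sum fun i _ => ?_) (Nat.cast_nonneg _)
        rw [mul_right_comm]
        exact mul_le_mul_of_nonneg_right (hK ⟨f, hf⟩ i) (integral_nonneg fun y => sq_nonneg _)

theorem lambdaLip_le_sq_mul_sSup_rayleighQuotients [FiniteDimensional ℝ F]
    (hF : ∀ f ∈ F, memW12Lip ν f) (hT : LipschitzWith L T) (hTμ : MeasurePreserving T μ ν) :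
    lambdaLip μ (Module.finrank ℝ F) ≤ L ^ 2 * sSup (rayleighQuotients ν F) := by
  let pullback : F →ₗ[ℝ] (X → ℝ) := LinearMap.funLeft ℝ ℝ T ∘ₗ F.subtype
  have pullback_injective : Function.Injective pullback := by
    refine (injective_iff_map_eq_zero pullback).2 fun f hf => Subtype.ext ?_
    refine (hF _ f.2).eq_zero_of_integral_sq_eq_zero ?_
    rw [← (hF _ f.2).integral_comp_sq_eq hTμ]
    simp [show ∀ x, f.1 (T x) = 0 from congrFun hf]
  rw [← LinearMap.finrank_range_of_inj pullback_injective]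
  refine (lambdaLip_le_sSup_rayleighQuotients ?_).trans (Real.sSup_le ?_
    (mul_nonneg (sq_nonneg _) (sSup_rayleighQuotients_nonneg ν F)))
  · rintro _ ⟨f, rfl⟩
    exact (hF _ f.2).comp_measurePreserving hT hTμ
  · rintro r ⟨_, ⟨f, rfl⟩, f_ne, rfl⟩
    have sq_eq : ∫ x, pullback f x ^ 2 ∂μ = ∫ y, f.1 y ^ 2 ∂ν :=
      (hF _ f.2).integral_comp_sq_eq hTμ
    calc (∫ x, localLip (pullback f) x ^ 2 ∂μ) / ∫ x, pullback f x ^ 2 ∂μ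
        ≤ (L ^ 2 * ∫ y, localLip f.1 y ^ 2 ∂ν) / ∫ y, f.1 y ^ 2 ∂ν := by
          rw [sq_eq]
          gcongr
          exact (hF _ f.2).integral_localLip_comp_sq_le hT hTμ
      _ ≤ L ^ 2 * sSup (rayleighQuotients ν F) := by
          rw [mul_div_assoc]
          gcongr
          exact le_csSup (bddAbove_rayleighQuotients hF) ⟨f.1, f.2, sq_eq ▸ f_ne, rfl⟩

-- Without a `k`-dimensional test space on `Y`, `lambdaLip ν k` is the junk value `sInf ∅ = 0`.
theorem lambdaLip_le_sq_mul (hT : LipschitzWith L T) (hTμ : MeasurePreserving T μ ν) {k : ℕ}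
    (hk : 1 ≤ k)
    (hF : ∃ F : Submodule ℝ (Y → ℝ), Module.finrank ℝ F = k ∧ ∀ f ∈ F, memW12Lip ν f) :
    lambdaLip μ k ≤ L ^ 2 * lambdaLip ν k := by
  obtain ⟨F₀, finrank_F₀, hF₀⟩ := hF
  rw [lambdaLip.eq_1 ν, ← smul_eq_mul, ← Real.sInf_smul_of_nonneg (sq_nonneg _)]
  refine le_csInf (Set.Nonempty.smul_set ⟨_, F₀, finrank_F₀, hF₀, rfl⟩) ?_
  rintro _ ⟨_, ⟨F, rfl, hF, rfl⟩, rfl⟩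
  have : FiniteDimensional ℝ F := .of_finrank_pos hk
  exact lambdaLip_le_sq_mul_sSup_rayleighQuotients hF hT hTμ

end Eigenvalue

theorem aeval_injective_of_infinite_range {R Y : Type*} [CommRing R] [IsDomain R] {u : Y → R}
    (hu : (Set.range u).Infinite) :
    Function.Injective (Polynomial.aeval u : Polynomial R →ₐ[R] Y → R) := by
  refine (injective_iff_map_eq_zero _).2 fun P hP => ?_
  refine P.eq_zero_of_infinite_isRoot (hu.mono ?_)
  rintro _ ⟨y, rfl⟩
  exact (Polynomial.aeval_fn_apply P u y).symm.trans (congrFun hP y)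

theorem exists_finrank_eq_and_forall_memW12Lip {Y : Type*} [MetricSpace Y] [CompactSpace Y]
    [PreconnectedSpace Y] [Nontrivial Y] [MeasurableSpace Y] (ν : Measure Y) [IsFiniteMeasure ν]
    (k : ℕ) :
    ∃ F : Submodule ℝ (Y → ℝ), Module.finrank ℝ F = k ∧ ∀ f ∈ F, memW12Lip ν f := by
  obtain ⟨y₀, y₁, y₀_ne_y₁⟩ := exists_pair_ne Y
  let u : Y → ℝ := fun y => dist y y₀
  have hu : LipschitzWith 1 u := LipschitzWith.dist_left y₀
  have range_infinite : (Set.range u).Infinite := by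
    refine (isPreconnected_range hu.continuous).infinite_of_nontrivial ?_
    refine ⟨u y₀, ⟨y₀, rfl⟩, u y₁, ⟨y₁, rfl⟩, ?_⟩
    simpa only [u, dist_self] using (dist_pos.2 y₀_ne_y₁.symm).ne
  let evalAt : Polynomial.degreeLT ℝ k →ₗ[ℝ] (Y → ℝ) :=
    (Polynomial.aeval u).toLinearMap ∘ₗ (Polynomial.degreeLT ℝ k).subtype
  have evalAt_injective : Function.Injective evalAt :=
    (aeval_injective_of_infinite_range range_infinite).comp Subtype.val_injective
  refine ⟨LinearMap.range evalAt, ?_, ?_⟩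
  · rw [LinearMap.finrank_range_of_inj evalAt_injective,
      (Polynomial.degreeLTEquiv ℝ k).finrank_eq, Module.finrank_fin_fun]
  · rintro _ ⟨P, rfl⟩
    have : evalAt P = (fun t => P.1.eval t) ∘ u := funext fun y => Polynomial.aeval_fn_apply _ _ _
    rw [this]
    exact memW12Lip_of_locallyLipschitz
      ((Polynomial.contDiff_aeval P.1 1).locallyLipschitz.comp hu.locallyLipschitz)

theorem isOpenPosMeasure_comap_subtype {E : Type*} [TopologicalSpace E] [MeasurableSpace E]
    {m : Measure E} [m.IsOpenPosMeasure] {B : Set E} (hB : MeasurableSet B)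
    (hBc : B ⊆ closure (interior B)) :
    (m.comap (Subtype.val : B → E)).IsOpenPosMeasure := by
  refine ⟨fun U hU ⟨x, hx⟩ => ?_⟩
  obtain ⟨V, hV, rfl⟩ := isOpen_induced_iff.1 hU
  rw [comap_subtype_coe_apply hB, Subtype.image_preimage_coe]
  have pos : 0 < m (V ∩ interior B) :=
    (hV.inter isOpen_interior).measure_pos _ (mem_closure_iff.1 (hBc x.2) V hV hx)
  exact (pos.trans_le (measure_mono fun z hz =>
    Set.mem_inter (interior_subset hz.2) hz.1)).ne'

theorem measurePreserving_codRestrict {X E : Type*} [MeasurableSpace X] [MeasurableSpace E]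
    {μ : Measure X} {m : Measure E} {B : Set E} (hB : MeasurableSet B) {S : X → E}
    (hSμ : MeasurePreserving S μ (m.restrict B)) (hSB : ∀ x, S x ∈ B) :
    MeasurePreserving (B.codRestrict S hSB) μ (m.comap Subtype.val) := by
  have meas : Measurable (B.codRestrict S hSB) := hSμ.measurable.subtype_mk
  refine ⟨meas, (MeasurableEmbedding.subtype_coe hB).map_injective ?_⟩
  rw [Measure.map_map measurable_subtype_coe meas, map_comap_subtype_coe hB]
  exact hSμ.map_eq

section ConvexBody

variable {E : Type*} [NormedAddCommGroup E] [NormedSpace ℝ E] [FiniteDimensional ℝ E]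
  [MeasurableSpace E] [BorelSpace E] {m : Measure E} [m.IsAddHaarMeasure] {B : Set E}

theorem nonempty_interior_of_convex_of_measure_ne_zero (hB : Convex ℝ B) (hmB : m B ≠ 0) :
    (interior B).Nonempty := by
  by_contra! interior_empty
  refine hmB (measure_mono_null ?_ (hB.addHaar_frontier m))
  rw [frontier, interior_empty, Set.sdiff_empty]
  exact subset_closure

theorem lambdaLip_le_sq_mul_of_convex [Nontrivial E] (hB : Convex ℝ B) (hBc : IsCompact B)
    (hmB : m B ≠ 0) {X : Type*} [PseudoMetricSpace X] [MeasurableSpace X] {μ : Measure X}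
    {S : X → E} {L : NNReal} (hS : LipschitzWith L S) (hSμ : MeasurePreserving S μ (m.restrict B))
    (hSB : ∀ x, S x ∈ B) {k : ℕ} (hk : 1 ≤ k) :
    lambdaLip μ k ≤ L ^ 2 * lambdaLip (m.comap (Subtype.val : B → E)) k := by
  have interior_nonempty := nonempty_interior_of_convex_of_measure_ne_zero hB hmB
  have : (m.comap (Subtype.val : B → E)).IsOpenPosMeasure :=
    isOpenPosMeasure_comap_subtype hBc.measurableSet
      ((hB.closure_interior_eq_closure_of_nonempty_interior interior_nonempty).symm ▸
        subset_closure)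
  have : IsFiniteMeasure (m.comap (Subtype.val : B → E)) := ⟨by
    simpa [comap_subtype_coe_apply hBc.measurableSet] using hBc.measure_lt_top⟩
  have : CompactSpace B := isCompact_iff_compactSpace.1 hBc
  have : PreconnectedSpace B := isPreconnected_iff_preconnectedSpace.1 hB.isPreconnected
  have : Nontrivial B := by
    rw [Set.nontrivial_coe_sort, ← Set.not_subsingleton_iff]
    exact fun h => hmB (h.measure_zero m)
  exact lambdaLip_le_sq_mul (T := B.codRestrict S hSB) (fun x y => hS x y)
    (measurePreserving_codRestrict hBc.measurableSet hSμ hSB) hk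
    (exists_finrank_eq_and_forall_memW12Lip _ k)

end ConvexBody

section LpUnitBall

variable {n : ℕ} {p : ℝ≥0∞}

theorem image_closedBall_eq_lpUnitBall [Fact (1 ≤ p)] :
    (PiLp.continuousLinearEquiv p ℝ fun _ : Fin n => ℝ).trans
      (PiLp.continuousLinearEquiv 2 ℝ fun _ : Fin n => ℝ).symm ''
        Metric.closedBall (0 : PiLp p fun _ : Fin n => ℝ) 1 = lpUnitBall n p := by
  rw [ContinuousLinearEquiv.image_eq_preimage_symm]
  ext x
  rw [Set.mem_preimage, mem_closedBall_zero_iff, lpUnitBall]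
  split_ifs with hp
  · subst hp
    rw [PiLp.norm_eq_ciSup]
    exact ⟨fun h i => (le_ciSup (Set.finite_range _).bddAbove i).trans h,
      fun h => Real.iSup_le h zero_le_one⟩
  · have p_pos : 0 < p.toReal := ENNReal.toReal_pos (zero_lt_one.trans_le Fact.out).ne' hp
    rw [PiLp.norm_eq_sum p_pos, one_div, Real.rpow_inv_le_iff_of_pos (by positivity) zero_le_one
      p_pos, Real.one_rpow]
    rfl

theorem isCompact_lpUnitBall (hp : 1 ≤ p) : IsCompact (lpUnitBall n p) := by
  have : Fact (1 ≤ p) := ⟨hp⟩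
  rw [← image_closedBall_eq_lpUnitBall]
  exact (isCompact_closedBall _ _).image (ContinuousLinearEquiv.continuous _)

theorem convex_lpUnitBall (hp : 1 ≤ p) : Convex ℝ (lpUnitBall n p) := by
  have : Fact (1 ≤ p) := ⟨hp⟩
  rw [← image_closedBall_eq_lpUnitBall]
  exact (convex_closedBall _ _).is_linear_image (LinearMap.isLinear _)

end LpUnitBall

section ProductMeasure

theorem lintegral_pi_prod {n : ℕ} {α : Fin n → Type*} [∀ i, MeasurableSpace (α i)]
    {μ : ∀ i, Measure (α i)} [∀ i, SigmaFinite (μ i)] {f : ∀ i, α i → ℝ≥0∞}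
    (hf : ∀ i, Measurable (f i)) :
    ∫⁻ x, ∏ i, f i (x i) ∂Measure.pi μ = ∏ i, ∫⁻ t, f i t ∂μ i := by
  induction n with
  | zero => simp
  | succ n ih =>
    have split_zero := (measurePreserving_piFinSuccAbove μ 0).symm
    rw [← split_zero.lintegral_comp_emb (MeasurableEquiv.measurableEmbedding _)]
    simp only [Fin.prod_univ_succ]
    rw [← ih fun i => hf i.succ, ← lintegral_prod_mul (hf 0).aemeasurable
      (Finset.measurable_fun_prod _ fun i _ =>
        (hf i.succ).comp (measurable_pi_apply i)).aemeasurable]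
    rfl

variable {n : ℕ} {α : Fin n → Type*} [∀ i, MeasurableSpace (α i)] {μ : ∀ i, Measure (α i)}
  [∀ i, SigmaFinite (μ i)]

theorem pi_withDensity {f : ∀ i, α i → ℝ≥0∞} (hf : ∀ i, Measurable (f i))
    [∀ i, SigmaFinite ((μ i).withDensity (f i))] :
    Measure.pi (fun i => (μ i).withDensity (f i)) =
      (Measure.pi μ).withDensity fun x => ∏ i, f i (x i) := by
  refine Measure.pi_eq fun s hs => ?_
  have indicator_prod : ∀ x : ∀ i, α i, (Set.univ.pi s).indicator (fun x => ∏ i, f i (x i)) x =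
      ∏ i, (s i).indicator (f i) (x i) := fun x => by
    classical
    simp only [Set.indicator_apply, Set.mem_univ_pi, Finset.prod_ite_zero, Finset.mem_univ,
      forall_true_left]
  rw [withDensity_apply _ (.univ_pi hs), ← lintegral_indicator (.univ_pi hs)]
  simp only [indicator_prod, lintegral_pi_prod fun i => (hf i).indicator (hs i),
    lintegral_indicator (hs _), withDensity_apply _ (hs _)]

end ProductMeasure

theorem map_withDensity_comp {α β : Type*} [MeasurableSpace α] [MeasurableSpace β] {μ : Measure α}
    {ν : Measure β} {e : α → β} (he : MeasurePreserving e μ ν) {g : β → ℝ≥0∞} (hg : Measurable g) :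
    (μ.withDensity fun x => g (e x)).map e = ν.withDensity g := by
  ext s hs
  rw [Measure.map_apply he.measurable hs, withDensity_apply _ (he.measurable hs),
    withDensity_apply _ hs, he.setLIntegral_comp_preimage hs hg]

theorem map_inv_measure_univ_smul_eq {α β : Type*} [MeasurableSpace α] [MeasurableSpace β]
    {M : Measure α} {c : ℝ≥0∞} {f : α → β} {ν : Measure β} [IsProbabilityMeasure ν]
    (hν : (c • M).map f = ν) : ((M Set.univ)⁻¹ • M).map f = ν := by
  have : IsProbabilityMeasure ((c • M).map f) := by rwa [hν]
  have mass : (c • M) Set.univ = 1 := (Measure.isProbabilityMeasure_of_map f).measure_univ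
  rw [Measure.smul_apply, smul_eq_mul] at mass
  rw [← ENNReal.eq_inv_of_mul_eq_one_left mass, hν]

theorem prod_gaussianPDF (n : ℕ) (x : EuclideanSpace ℝ (Fin n)) :
    ∏ i, ProbabilityTheory.gaussianPDF 0 1 (x i) =
      ENNReal.ofReal ((√(2 * Real.pi))⁻¹ ^ n) * ENNReal.ofReal (Real.exp (-‖x‖ ^ 2 / 2)) := by
  simp only [ProbabilityTheory.gaussianPDF]
  rw [← ENNReal.ofReal_prod_of_nonneg fun i _ => ProbabilityTheory.gaussianPDFReal_nonneg _ _ _,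
    ← ENNReal.ofReal_mul (by positivity)]
  simp only [ProbabilityTheory.gaussianPDFReal, Finset.prod_mul_distrib, ← Real.exp_sum,
    EuclideanSpace.norm_sq_eq, Finset.prod_const, Finset.card_univ, Fintype.card_fin, sub_zero,
    NNReal.coe_one, mul_one, Real.norm_eq_abs, sq_abs, ← Finset.sum_div, ← Finset.sum_neg_distrib]

theorem map_ofLp_smul_withDensity_exp_neg_sq (n : ℕ) :
    (ENNReal.ofReal ((√(2 * Real.pi))⁻¹ ^ n) • volume.withDensity
      fun x : EuclideanSpace ℝ (Fin n) => ENNReal.ofReal (Real.exp (-‖x‖ ^ 2 / 2))).map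
        WithLp.ofLp = Measure.pi fun _ => ProbabilityTheory.gaussianReal 0 1 := by
  have hφ := ProbabilityTheory.measurable_gaussianPDF 0 1
  have hprod : Measurable fun x : Fin n → ℝ => ∏ i, ProbabilityTheory.gaussianPDF 0 1 (x i) :=
    Finset.measurable_fun_prod _ fun i _ => hφ.comp (measurable_pi_apply i)
  have gaussian_eq := ProbabilityTheory.gaussianReal_of_var_ne_zero 0 one_ne_zero
  have : SigmaFinite (volume.withDensity (ProbabilityTheory.gaussianPDF 0 1)) := by
    rw [← gaussian_eq]
    infer_instance
  simp only [gaussian_eq]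
  rw [pi_withDensity fun _ => hφ, ← volume_pi,
    ← map_withDensity_comp (PiLp.volume_preserving_ofLp (Fin n)) hprod,
    ← withDensity_smul' _ _ ENNReal.ofReal_ne_top]
  simp only [prod_gaussianPDF]
  rfl

theorem measurePreserving_ofLp_stdGaussian (n : ℕ) :
    MeasurePreserving (WithLp.ofLp : EuclideanSpace ℝ (Fin n) → Fin n → ℝ) (stdGaussian n)
      (Measure.pi fun _ => ProbabilityTheory.gaussianReal 0 1) :=
  ⟨(PiLp.volume_preserving_ofLp (Fin n)).measurable,
    map_inv_measure_univ_smul_eq (map_ofLp_smul_withDensity_exp_neg_sq n)⟩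

section TailMass

/-- The mass `∫ t in (x, ∞), g t` that the density `g` puts to the right of `x`. -/
noncomputable def tailMass (g : ℝ → ℝ) (x : ℝ) : ℝ := ∫ t in Set.Ioi x, g t

theorem tendsto_tailMass_atTop (g : ℝ → ℝ) : Tendsto (tailMass g) atTop (𝓝 0) :=
  tendsto_integral_Ioi_zero tendsto_id

theorem tailMass_sub_tailMass {g : ℝ → ℝ} (hg : Integrable g) (x y : ℝ) :
    tailMass g x - tailMass g y = ∫ t in x..y, g t :=
  intervalIntegral.integral_Ioi_sub_Ioi' hg.integrableOn hg.integrableOn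

theorem mul_sub_le_tailMass_sub {g : ℝ → ℝ} {c x y : ℝ} (hg : Integrable g) (hxy : x ≤ y)
    (hc : ∀ t ∈ Set.Icc x y, c ≤ g t) : c * (y - x) ≤ tailMass g x - tailMass g y := by
  rw [tailMass_sub_tailMass hg, mul_comm, ← smul_eq_mul, ← intervalIntegral.integral_const]
  exact intervalIntegral.integral_mono_on hxy intervalIntegrable_const hg.intervalIntegrable hc

theorem tailMass_sub_le_mul_sub {g : ℝ → ℝ} {c x y : ℝ} (hg : Integrable g) (hxy : x ≤ y)
    (hc : ∀ t ∈ Set.Icc x y, g t ≤ c) : tailMass g x - tailMass g y ≤ c * (y - x) := by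
  rw [tailMass_sub_tailMass hg, mul_comm, ← smul_eq_mul, ← intervalIntegral.integral_const]
  exact intervalIntegral.integral_mono_on hxy hg.intervalIntegrable intervalIntegrable_const hc

theorem abs_tailMass_sub_le {g : ℝ → ℝ} {c : ℝ} (hg : Integrable g) (hg₀ : ∀ t, 0 ≤ g t)
    (hgc : ∀ t, g t ≤ c) (x y : ℝ) : |tailMass g x - tailMass g y| ≤ c * |x - y| := by
  wlog hxy : x ≤ y generalizing x y
  · simpa only [abs_sub_comm] using this y x (le_of_not_ge hxy)
  have lower : 0 ≤ tailMass g x - tailMass g y := by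
    simpa using mul_sub_le_tailMass_sub hg hxy fun t _ => hg₀ t
  rw [abs_of_nonneg lower, abs_sub_comm, abs_of_nonneg (sub_nonneg.2 hxy)]
  exact tailMass_sub_le_mul_sub hg hxy fun t _ => hgc t

theorem hasDerivAt_tailMass {g : ℝ → ℝ} (hgc : Continuous g) (hg : Integrable g) (x : ℝ) :
    HasDerivAt (tailMass g) (-g x) x := by
  have tail_eq : tailMass g = fun y => tailMass g 0 - ∫ t in (0 : ℝ)..y, g t := by
    funext y
    rw [← tailMass_sub_tailMass hg]
    ring
  rw [tail_eq]
  exact (intervalIntegral.integral_hasDerivAt_right hg.intervalIntegrable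
    (hgc.stronglyMeasurableAtFilter _ _) hgc.continuousAt).const_sub _

theorem nonneg_of_deriv_nonpos_of_tendsto_zero {a : ℝ} {f f' : ℝ → ℝ}
    (hf : ∀ x, a ≤ x → HasDerivAt f (f' x) x) (hf' : ∀ x, a ≤ x → f' x ≤ 0)
    (hlim : Tendsto f atTop (𝓝 0)) : 0 ≤ f a := by
  have anti : AntitoneOn f (Set.Ici a) := by
    refine antitoneOn_of_hasDerivWithinAt_nonpos (f' := f') (convex_Ici a)
      (fun x hx => (hf x hx).continuousAt.continuousWithinAt) ?_ ?_
    all_goals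
      intro x hx
      rw [interior_Ici] at hx
    exacts [(hf x hx.le).hasDerivWithinAt, hf' x hx.le]
  refine le_of_tendsto hlim ?_
  filter_upwards [eventually_ge_atTop a] with x hx using anti Set.self_mem_Ici hx hx

end TailMass

section Transport

/-- A continuous, strictly positive, even probability density on the line. -/
structure IsSymmDensity (g : ℝ → ℝ) : Prop where
  pos (x : ℝ) : 0 < g x
  continuous : Continuous g
  even (x : ℝ) : g (-x) = g x
  integral_eq_one : ∫ x, g x = 1

namespace IsSymmDensity

variable {f g : ℝ → ℝ}

theorem integrable (hg : IsSymmDensity g) : Integrable g :=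
  integrable_of_integral_eq_one hg.integral_eq_one

theorem hasDerivAt_tailMass (hg : IsSymmDensity g) (x : ℝ) :
    HasDerivAt (tailMass g) (-g x) x :=
  _root_.hasDerivAt_tailMass hg.continuous hg.integrable x

theorem continuous_tailMass (hg : IsSymmDensity g) : Continuous (tailMass g) :=
  continuous_iff_continuousAt.2 fun x => (hg.hasDerivAt_tailMass x).continuousAt

theorem strictAnti_tailMass (hg : IsSymmDensity g) : StrictAnti (tailMass g) :=
  strictAnti_of_hasDerivAt_neg hg.hasDerivAt_tailMass fun x => neg_neg_of_pos (hg.pos x)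

theorem tailMass_neg (hg : IsSymmDensity g) (x : ℝ) : tailMass g (-x) = 1 - tailMass g x := by
  have reflect := integral_comp_neg_Ioi (-x) g
  have split := intervalIntegral.integral_Iic_add_Ioi (b := x)
    hg.integrable.integrableOn hg.integrable.integrableOn
  simp only [hg.even, neg_neg] at reflect
  rw [hg.integral_eq_one, ← reflect] at split
  exact eq_sub_of_add_eq split

theorem tailMass_zero (hg : IsSymmDensity g) : tailMass g 0 = 1 / 2 := by
  have symm := hg.tailMass_neg 0
  rw [neg_zero] at symm
  linarith

theorem tailMass_pos (hg : IsSymmDensity g) (x : ℝ) : 0 < tailMass g x :=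
  (hg.strictAnti_tailMass.antitone.le_of_tendsto (tendsto_tailMass_atTop g) (x + 1)).trans_lt
    (hg.strictAnti_tailMass (lt_add_one x))

theorem range_tailMass (hg : IsSymmDensity g) : Set.range (tailMass g) = Set.Ioo 0 1 := by
  have lim_bot : Tendsto (tailMass g) atBot (𝓝 1) := by
    simpa [Function.comp_def, hg.tailMass_neg] using
      ((tendsto_tailMass_atTop g).comp tendsto_neg_atBot_atTop).const_sub 1
  refine Set.Subset.antisymm ?_ fun y hy => ?_
  · rintro _ ⟨x, rfl⟩
    have := hg.tailMass_pos (-x)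
    rw [hg.tailMass_neg] at this
    exact ⟨hg.tailMass_pos x, sub_pos.1 this⟩
  · obtain ⟨a, ha⟩ := ((tendsto_tailMass_atTop g).eventually (gt_mem_nhds hy.1)).exists
    obtain ⟨b, hb⟩ := (lim_bot.eventually (lt_mem_nhds hy.2)).exists
    exact mem_range_of_exists_le_of_exists_ge hg.continuous_tailMass ⟨a, ha.le⟩ ⟨b, hb.le⟩

end IsSymmDensity

/-- The monotone rearrangement of the density `f` onto the density `g`: the map carrying the point
with a given `f`-mass to its right to the point with the same `g`-mass to its right. -/
noncomputable def transport (f g : ℝ → ℝ) (x : ℝ) : ℝ := (tailMass g).invFun (tailMass f x)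

namespace IsSymmDensity

variable {f g : ℝ → ℝ}

theorem tailMass_transport (hf : IsSymmDensity f) (hg : IsSymmDensity g) (x : ℝ) :
    tailMass g (transport f g x) = tailMass f x := by
  refine Function.invFun_eq ?_
  rw [← Set.mem_range, hg.range_tailMass, ← hf.range_tailMass]
  exact Set.mem_range_self x

theorem strictMono_transport (hf : IsSymmDensity f) (hg : IsSymmDensity g) :
    StrictMono (transport f g) := fun x y hxy => by
  rw [← hg.strictAnti_tailMass.lt_iff_gt, hf.tailMass_transport hg, hf.tailMass_transport hg]
  exact hf.strictAnti_tailMass hxy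

theorem surjective_transport (hf : IsSymmDensity f) (hg : IsSymmDensity g) :
    Function.Surjective (transport f g) := fun y =>
  ⟨transport g f y, hg.strictAnti_tailMass.injective <| by
    rw [hf.tailMass_transport hg, hg.tailMass_transport hf]⟩

theorem transport_neg (hf : IsSymmDensity f) (hg : IsSymmDensity g) (x : ℝ) :
    transport f g (-x) = -transport f g x :=
  hg.strictAnti_tailMass.injective <| by
    rw [hf.tailMass_transport hg, hg.tailMass_neg, hf.tailMass_transport hg, hf.tailMass_neg]

theorem transport_zero (hf : IsSymmDensity f) (hg : IsSymmDensity g) : transport f g 0 = 0 :=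
  hg.strictAnti_tailMass.injective <| by
    rw [hf.tailMass_transport hg, hf.tailMass_zero, hg.tailMass_zero]

theorem hasDerivAt_transport (hf : IsSymmDensity f) (hg : IsSymmDensity g) (x : ℝ) :
    HasDerivAt (transport f g) (f x / g (transport f g x)) x := by
  have cont : Continuous (transport f g) :=
    (hf.strictMono_transport hg).monotone.continuous_of_surjective (hf.surjective_transport hg)
  have deriv := HasDerivAt.of_comp_left cont.continuousAt (hg.hasDerivAt_tailMass _)
    (hf.hasDerivAt_tailMass x) (neg_ne_zero.2 (hg.pos _).ne')
    (.of_forall <| hf.tailMass_transport hg)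
  rwa [neg_div_neg_eq] at deriv

end IsSymmDensity

theorem map_withDensity_of_hasDerivAt {w w' : ℝ → ℝ} {f g : ℝ → ℝ≥0∞}
    (hw : ∀ x, HasDerivAt w (w' x) x) (hinj : w.Injective)
    (hfg : ∀ x, ENNReal.ofReal |w' x| * g (w x) = f x) :
    (volume.withDensity f).map w = (volume.withDensity g).restrict (Set.range w) := by
  have meas : Measurable w := Continuous.measurable <|
    continuous_iff_continuousAt.2 fun x => (hw x).continuousAt
  ext s hs
  rw [Measure.map_apply meas hs, Measure.restrict_apply hs, withDensity_apply _ (meas hs),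
    withDensity_apply', ← Set.image_preimage_eq_inter_range,
    lintegral_image_eq_lintegral_abs_deriv_mul (meas hs) (fun x _ => (hw x).hasDerivWithinAt)
      hinj.injOn]
  simp only [hfg]

namespace IsSymmDensity

variable {f g : ℝ → ℝ}

theorem measurePreserving_transport (hf : IsSymmDensity f) (hg : IsSymmDensity g) :
    MeasurePreserving (transport f g) (volume.withDensity fun x => ENNReal.ofReal (f x))
      (volume.withDensity fun x => ENNReal.ofReal (g x)) := by
  have deriv := hf.hasDerivAt_transport hg
  refine ⟨(hf.strictMono_transport hg).monotone.measurable, ?_⟩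
  rw [map_withDensity_of_hasDerivAt deriv (hf.strictMono_transport hg).injective fun x => ?_,
    (hf.surjective_transport hg).range_eq, Measure.restrict_univ]
  have hgx := hg.pos (transport f g x)
  rw [← ENNReal.ofReal_mul (abs_nonneg _), abs_of_pos (div_pos (hf.pos x) hgx),
    div_mul_cancel₀ _ hgx.ne']

theorem measurePreserving_half_sub_tailMass (hf : IsSymmDensity f) :
    MeasurePreserving (fun x => 1 / 2 - tailMass f x)
      (volume.withDensity fun x => ENNReal.ofReal (f x))
      (volume.restrict (Set.Icc (-1 / 2) (1 / 2))) := by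
  have deriv : ∀ x, HasDerivAt (fun x => 1 / 2 - tailMass f x) (f x) x := fun x => by
    simpa only [neg_neg] using (hf.hasDerivAt_tailMass x).const_sub (1 / 2)
  have range_eq : Set.range (fun x => 1 / 2 - tailMass f x) = Set.Ioo (-1 / 2) (1 / 2) := by
    rw [← Function.comp_def (1 / 2 - ·) (tailMass f), Set.range_comp, hf.range_tailMass,
      Set.image_const_sub_Ioo]
    norm_num
  have inj : Function.Injective fun x => 1 / 2 - tailMass f x :=
    sub_right_injective.comp hf.strictAnti_tailMass.injective
  refine ⟨(continuous_const.sub hf.continuous_tailMass).measurable, ?_⟩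
  rw [map_withDensity_of_hasDerivAt (g := 1) deriv inj fun x => ?_, withDensity_one, range_eq,
    Measure.restrict_congr_set Ioo_ae_eq_Icc]
  rw [abs_of_pos (hf.pos x), Pi.one_apply, mul_one]

end IsSymmDensity

end Transport

section Gaussian

local notation "φ" => ProbabilityTheory.gaussianPDFReal 0 1

theorem gaussianPDFReal_zero_one (x : ℝ) : φ x = (√(2 * Real.pi))⁻¹ * Real.exp (-x ^ 2 / 2) := by
  simp [ProbabilityTheory.gaussianPDFReal]

theorem isSymmDensity_gaussianPDFReal : IsSymmDensity φ where
  pos x := ProbabilityTheory.gaussianPDFReal_pos _ _ _ one_ne_zero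
  continuous := by unfold ProbabilityTheory.gaussianPDFReal; fun_prop
  even x := by simp only [gaussianPDFReal_zero_one, neg_sq]
  integral_eq_one := ProbabilityTheory.integral_gaussianPDFReal_eq_one 0 one_ne_zero

theorem hasDerivAt_gaussianPDFReal (x : ℝ) : HasDerivAt φ (-x * φ x) x := by
  have exponent : HasDerivAt (fun x : ℝ => -x ^ 2 / 2) (-x) x := by
    convert! ((hasDerivAt_pow 2 x).neg).div_const 2 using 1
    push_cast
    ring
  simp only [funext gaussianPDFReal_zero_one]
  convert! exponent.exp.const_mul (√(2 * Real.pi))⁻¹ using 1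
  ring

theorem tendsto_gaussianPDFReal_atTop : Tendsto φ atTop (𝓝 0) := by
  have exponent : Tendsto (fun x : ℝ => -x ^ 2 / 2) atTop atBot := by
    simp only [neg_div]
    exact tendsto_neg_atTop_atBot.comp
      ((tendsto_pow_atTop two_ne_zero).atTop_div_const two_pos)
  simpa [funext gaussianPDFReal_zero_one] using
    (Real.tendsto_exp_atBot.comp exponent).const_mul (√(2 * Real.pi))⁻¹

theorem gaussianPDFReal_le_mul_tailMass {x : ℝ} (hx : 0 ≤ x) : φ x ≤ (x + 1) * tailMass φ x := by
  rw [← div_le_iff₀' (by positivity), ← sub_nonneg]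
  refine nonneg_of_deriv_nonpos_of_tendsto_zero (f := fun y => tailMass φ y - φ y / (y + 1))
    (f' := fun y => -(φ y * y / (y + 1) ^ 2)) (fun y hy => ?_) (fun y hy => ?_) ?_
  · have hy1 : y + 1 ≠ 0 := by linarith
    convert! (isSymmDensity_gaussianPDFReal.hasDerivAt_tailMass y).sub
      ((hasDerivAt_gaussianPDFReal y).div ((hasDerivAt_id y).add_const 1) hy1) using 1
    simp only [id]
    field_simp
    ring
  · have := isSymmDensity_gaussianPDFReal.pos y
    have := hx.trans hy
    simp only [Left.neg_nonpos_iff]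
    positivity
  · simpa using (tendsto_tailMass_atTop φ).sub (tendsto_gaussianPDFReal_atTop.div_atTop
      (tendsto_atTop_add_const_right _ 1 tendsto_id))

theorem tailMass_gaussianPDFReal_le {x : ℝ} (hx : 0 ≤ x) :
    tailMass φ x ≤ Real.exp (-x ^ 2 / 2) := by
  have hφ := isSymmDensity_gaussianPDFReal
  have shifted : Integrable fun t => Real.exp (-x ^ 2 / 2) * φ (t - x) :=
    (hφ.integrable.comp_sub_right x).const_mul _
  calc tailMass φ x ≤ ∫ t in Set.Ioi x, Real.exp (-x ^ 2 / 2) * φ (t - x) := by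
        refine setIntegral_mono_on hφ.integrable.integrableOn shifted.integrableOn
          measurableSet_Ioi fun t ht => ?_
        rw [gaussianPDFReal_zero_one, gaussianPDFReal_zero_one, mul_left_comm, ← Real.exp_add]
        gcongr
        nlinarith [Set.mem_Ioi.1 ht]
    _ ≤ ∫ t, Real.exp (-x ^ 2 / 2) * φ (t - x) :=
        setIntegral_le_integral shifted <| .of_forall fun t =>
          mul_nonneg (Real.exp_pos _).le (hφ.pos _).le
    _ = Real.exp (-x ^ 2 / 2) := by
        rw [integral_const_mul, integral_sub_right_eq_self φ, hφ.integral_eq_one, mul_one]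

theorem gaussianPDFReal_le (x : ℝ) : φ x ≤ 2 / 5 * Real.exp (-x ^ 2 / 2) := by
  rw [gaussianPDFReal_zero_one]
  gcongr
  rw [inv_le_comm₀ (by positivity) (by norm_num)]
  refine Real.le_sqrt_of_sq_le ?_
  linarith [Real.pi_gt_d2]

theorem gaussianPDFReal_mul_add_one_le_one {x : ℝ} (hx : 0 ≤ x) :
    φ x * (x + 1) ≤ 1 := by
  have exp_le : Real.exp (-x ^ 2 / 2) * (x ^ 2 / 2 + 1) ≤ 1 := by
    rw [neg_div, Real.exp_neg, inv_mul_le_one₀ (Real.exp_pos _)]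
    exact Real.add_one_le_exp _
  have linear_le : x + 1 ≤ 2 * (x ^ 2 / 2 + 1) := by nlinarith [sq_nonneg (x - 1)]
  calc φ x * (x + 1) ≤ (2 / 5 * Real.exp (-x ^ 2 / 2)) * (2 * (x ^ 2 / 2 + 1)) := by
        gcongr
        exact gaussianPDFReal_le x
    _ ≤ 1 := by linarith

theorem sq_gaussianPDFReal_le_tailMass {x : ℝ} (hx : 0 ≤ x) : φ x ^ 2 ≤ tailMass φ x := by
  have hφ := isSymmDensity_gaussianPDFReal
  calc φ x ^ 2 = φ x * φ x := sq _
    _ ≤ φ x * ((x + 1) * tailMass φ x) :=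
        mul_le_mul_of_nonneg_left (gaussianPDFReal_le_mul_tailMass hx) (hφ.pos x).le
    _ = (φ x * (x + 1)) * tailMass φ x := by ring
    _ ≤ tailMass φ x :=
        mul_le_of_le_one_left (hφ.tailMass_pos x).le (gaussianPDFReal_mul_add_one_le_one hx)

end Gaussian

section ExpPow

/-- The total mass `∫ y, exp (-|y| ^ p)`. -/
noncomputable def expPowMass (p : ℝ) : ℝ := 2 * Real.Gamma (1 / p + 1)

/-- The probability density on the line proportional to `exp (-|y| ^ p)`. -/
noncomputable def expPowDensity (p y : ℝ) : ℝ := (expPowMass p)⁻¹ * Real.exp (-|y| ^ p)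

variable {p : ℝ}

theorem expPowMass_pos (hp : 0 < p) : 0 < expPowMass p :=
  mul_pos two_pos (Real.Gamma_pos_of_pos (by positivity))

theorem expPowMass_le_two (hp : 1 ≤ p) : expPowMass p ≤ 2 := by
  have inv_le_one : 1 / p ≤ 1 := div_le_one_of_le₀ hp (by positivity)
  have convex := Real.convexOn_Gamma.2 (Set.mem_Ioi.2 one_pos) (Set.mem_Ioi.2 two_pos)
    (sub_nonneg.2 inv_le_one) (by positivity : 0 ≤ 1 / p) (sub_add_cancel _ _)
  simp only [smul_eq_mul, Real.Gamma_one, Real.Gamma_two] at convex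
  rw [show (1 - 1 / p) * 1 + 1 / p * 2 = 1 / p + 1 by ring] at convex
  rw [expPowMass]
  linarith

theorem isSymmDensity_expPowDensity (hp : 0 < p) : IsSymmDensity (expPowDensity p) where
  pos y := mul_pos (inv_pos.2 (expPowMass_pos hp)) (Real.exp_pos _)
  continuous := continuous_const.mul <| Real.continuous_exp.comp
    (continuous_abs.rpow_const fun _ => .inr hp.le).neg
  even y := by simp only [expPowDensity, abs_neg]
  integral_eq_one := by
    have := (expPowMass_pos hp).ne'
    unfold expPowDensity
    rw [integral_comp_abs (f := fun t => (expPowMass p)⁻¹ * Real.exp (-t ^ p)),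
      integral_const_mul, integral_exp_neg_rpow hp, mul_left_comm, ← expPowMass,
      inv_mul_cancel₀ this]

theorem expPowDensity_of_nonneg (p : ℝ) {y : ℝ} (hy : 0 ≤ y) :
    expPowDensity p y = (expPowMass p)⁻¹ * Real.exp (-y ^ p) := by
  rw [expPowDensity, abs_of_nonneg hy]

theorem expPowDensity_le_of_abs_le (hp : 0 < p) {x y : ℝ} (hxy : |x| ≤ |y|) :
    expPowDensity p y ≤ expPowDensity p x := by
  have := expPowMass_pos hp
  unfold expPowDensity
  gcongr

theorem expPowDensity_le (hp : 0 < p) (y : ℝ) : expPowDensity p y ≤ (expPowMass p)⁻¹ := by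
  simpa [expPowDensity, hp.ne'] using
    expPowDensity_le_of_abs_le hp (abs_zero.trans_le (abs_nonneg y))

theorem inv_expPowDensity_le (hp : 0 < p) {y : ℝ} (hy : |y| ≤ 1) :
    (expPowDensity p y)⁻¹ ≤ expPowMass p * Real.exp 1 := by
  have := expPowMass_pos hp
  rw [expPowDensity, mul_inv, inv_inv, ← Real.exp_neg, neg_neg]
  gcongr
  exact Real.rpow_le_one (abs_nonneg y) hy hp.le

theorem hasDerivAt_expPowDensity (p : ℝ) {y : ℝ} (hy : 0 < y) :
    HasDerivAt (expPowDensity p) (-(p * y ^ (p - 1)) * expPowDensity p y) y := by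
  have on_pos : HasDerivAt (fun y : ℝ => (expPowMass p)⁻¹ * Real.exp (-y ^ p))
      (-(p * y ^ (p - 1)) * expPowDensity p y) y := by
    convert! ((Real.hasDerivAt_rpow_const (.inl hy.ne')).neg.exp).const_mul (expPowMass p)⁻¹
      using 1
    rw [expPowDensity_of_nonneg p hy.le]
    simp only [Pi.neg_apply]
    ring
  refine on_pos.congr_of_eventuallyEq ?_
  filter_upwards [lt_mem_nhds hy] with z hz using expPowDensity_of_nonneg p hz.le

theorem tendsto_expPowDensity_atTop (hp : 0 < p) :
    Tendsto (expPowDensity p) atTop (𝓝 0) := by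
  have on_pos := (Real.tendsto_exp_atBot.comp
    (tendsto_neg_atTop_atBot.comp (tendsto_rpow_atTop hp))).const_mul (expPowMass p)⁻¹
  rw [mul_zero] at on_pos
  refine on_pos.congr' ?_
  filter_upwards [eventually_ge_atTop 0] with z hz using (expPowDensity_of_nonneg p hz).symm

theorem two_mul_exp_neg_one_le_expPowMass (hp : 0 < p) :
    2 * Real.exp (-1) ≤ expPowMass p := by
  have hg := isSymmDensity_expPowDensity hp
  have hZ := expPowMass_pos hp
  have unit_interval := mul_sub_le_tailMass_sub hg.integrable zero_le_one fun t ht =>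
    expPowDensity_le_of_abs_le hp (abs_le_abs_of_nonneg ht.1 ht.2)
  have := hg.tailMass_pos 1
  rw [expPowDensity_of_nonneg p zero_le_one, hg.tailMass_zero, Real.one_rpow, sub_zero, mul_one]
    at unit_interval
  have le_half : (expPowMass p)⁻¹ * Real.exp (-1) ≤ 1 / 2 := by linarith
  rw [inv_mul_le_iff₀ hZ] at le_half
  linarith

theorem mul_tailMass_expPowDensity_le (hp : 1 ≤ p) {y : ℝ} (hy : 0 < y) :
    p * y ^ (p - 1) * tailMass (expPowDensity p) y ≤ expPowDensity p y := by
  have hp0 : 0 < p := by positivity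
  have hg := isSymmDensity_expPowDensity hp0
  set c := p * y ^ (p - 1) with hc
  have : 0 < c := by positivity
  rw [← sub_nonneg]
  refine nonneg_of_deriv_nonpos_of_tendsto_zero
    (f := fun z => expPowDensity p z - c * tailMass (expPowDensity p) z)
    (f' := fun z => (c - p * z ^ (p - 1)) * expPowDensity p z) (fun z hz => ?_) (fun z hz => ?_) ?_
  · convert! (hasDerivAt_expPowDensity p (hy.trans_le hz)).sub
      ((hg.hasDerivAt_tailMass z).const_mul c) using 1
    ring
  · refine mul_nonpos_of_nonpos_of_nonneg (sub_nonpos.2 ?_) (hg.pos z).le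
    rw [hc]
    gcongr
  · simpa using (tendsto_expPowDensity_atTop hp0).sub
      ((tendsto_tailMass_atTop (expPowDensity p)).const_mul c)

theorem expPowMass_mul_tailMass_le (hp : 1 ≤ p) {y : ℝ} (hy : y ≤ 1) :
    expPowMass p * tailMass (expPowDensity p) y ≤ (1 - y) + 1 / p := by
  have hp0 : 0 < p := by positivity
  have hZ := expPowMass_pos hp0
  have hg := isSymmDensity_expPowDensity hp0
  have below_one := tailMass_sub_le_mul_sub hg.integrable hy fun t _ => expPowDensity_le hp0 t
  have above_one : tailMass (expPowDensity p) 1 ≤ (expPowMass p)⁻¹ / p := by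
    rw [le_div_iff₀' hp0]
    simpa using (mul_tailMass_expPowDensity_le hp one_pos).trans (expPowDensity_le hp0 1)
  calc expPowMass p * tailMass (expPowDensity p) y
      ≤ expPowMass p * ((expPowMass p)⁻¹ * (1 - y) + (expPowMass p)⁻¹ / p) := by
        gcongr
        linarith
    _ = (1 - y) + 1 / p := by field_simp

theorem one_add_one_div_rpow_le_three (hp : 0 < p) : (1 + 1 / p) ^ p ≤ 3 :=
  calc (1 + 1 / p) ^ p ≤ Real.exp (1 / p) ^ p := by
        gcongr
        linarith [Real.add_one_le_exp (1 / p)]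
    _ = Real.exp 1 := by rw [← Real.exp_mul, one_div_mul_cancel hp.ne']
    _ ≤ 3 := by linarith [Real.exp_one_lt_d9]

theorem exp_neg_three_mul_rpow_le_tailMass (hp : 0 < p) {y : ℝ} (hy : 1 ≤ y) :
    (expPowMass p * p)⁻¹ * Real.exp (-(3 * y ^ p)) ≤ tailMass (expPowDensity p) y := by
  have hZ := expPowMass_pos hp
  have hg := isSymmDensity_expPowDensity hp
  set z := y * (1 + 1 / p) with hz
  have gap : z - y = y * p⁻¹ := by rw [hz]; ring
  have hyz : y ≤ z := sub_nonneg.1 (by rw [gap]; positivity)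
  have interval := mul_sub_le_tailMass_sub hg.integrable hyz fun t ht =>
    expPowDensity_le_of_abs_le hp (abs_le_abs_of_nonneg (by linarith [ht.1]) ht.2)
  have zp_le : z ^ p ≤ 3 * y ^ p := by
    rw [hz, Real.mul_rpow (by positivity) (by positivity), mul_comm]
    gcongr
    exact one_add_one_div_rpow_le_three hp
  calc (expPowMass p * p)⁻¹ * Real.exp (-(3 * y ^ p))
      ≤ ((expPowMass p)⁻¹ * p⁻¹) * Real.exp (-z ^ p) := by rw [mul_inv]; gcongr
    _ ≤ ((expPowMass p)⁻¹ * (y * p⁻¹)) * Real.exp (-z ^ p) := by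
        gcongr
        exact le_mul_of_one_le_left (by positivity) hy
    _ = expPowDensity p z * (z - y) := by
        rw [expPowDensity_of_nonneg p (by linarith), gap]
        ring
    _ ≤ tailMass (expPowDensity p) y := by linarith [hg.tailMass_pos z]

end ExpPow

section GaussianToExpPow

local notation "φ" => ProbabilityTheory.gaussianPDFReal 0 1

theorem add_one_mul_rpow_mul_one_sub_le_one {q y : ℝ} (hq : 0 ≤ q) (hy : 0 ≤ y) (hy1 : y ≤ 1) :
    (q + 1) * (y ^ q * (1 - y)) ≤ 1 := by
  have rpow_le : y ^ q ≤ Real.exp (-(q * (1 - y))) :=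
    calc y ^ q ≤ Real.exp (-(1 - y)) ^ q := by
          gcongr
          linarith [Real.add_one_le_exp (-(1 - y))]
      _ = Real.exp (-(q * (1 - y))) := by rw [← Real.exp_mul]; congr 1; ring
  have linear_le : (q + 1) * (1 - y) ≤ Real.exp (q * (1 - y)) := by
    linarith [Real.add_one_le_exp (q * (1 - y))]
  have := sub_nonneg.2 hy1
  calc (q + 1) * (y ^ q * (1 - y)) = y ^ q * ((q + 1) * (1 - y)) := by ring
    _ ≤ Real.exp (-(q * (1 - y))) * Real.exp (q * (1 - y)) := by gcongr
    _ = 1 := by rw [← Real.exp_add, neg_add_cancel, Real.exp_zero]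

section TailMassEq

variable {p x y : ℝ}

theorem sq_le_of_tailMass_eq (hp : 2 ≤ p) (hx : 0 ≤ x) (hy : 1 ≤ y)
    (h : tailMass φ x = tailMass (expPowDensity p) y) : x ^ 2 ≤ 7 * p * y ^ p := by
  have hp0 : 0 < p := by positivity
  have hZ := expPowMass_pos hp0
  have mass_le : expPowMass p * p ≤ Real.exp (2 * p) := by
    nlinarith [Real.add_one_le_exp (2 * p), expPowMass_le_two (one_le_two.trans hp)]
  have tails : Real.exp (-(3 * y ^ p)) ≤ Real.exp (2 * p + -x ^ 2 / 2) :=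
    calc Real.exp (-(3 * y ^ p)) ≤ expPowMass p * p * Real.exp (-x ^ 2 / 2) := by
          rw [← inv_mul_le_iff₀ (by positivity)]
          exact (exp_neg_three_mul_rpow_le_tailMass hp0 hy).trans
            (h ▸ tailMass_gaussianPDFReal_le hx)
      _ ≤ Real.exp (2 * p + -x ^ 2 / 2) := by rw [Real.exp_add]; gcongr
  have := Real.exp_le_exp.1 tails
  nlinarith [Real.one_le_rpow hy hp0.le]

theorem add_one_le_of_tailMass_eq (hp : 2 ≤ p) (hx : 0 ≤ x) (hy : 1 ≤ y)
    (h : tailMass φ x = tailMass (expPowDensity p) y) :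
    x + 1 ≤ 17 / 5 * (√p * y ^ (p / 2)) := by
  have sqrt_ge : 7 / 5 ≤ √p := Real.le_sqrt_of_sq_le (by linarith)
  have rpow_ge : 1 ≤ y ^ (p / 2) := Real.one_le_rpow hy (by linarith)
  have sq_eq : (√p * y ^ (p / 2)) ^ 2 = p * y ^ p := by
    rw [mul_pow, Real.sq_sqrt (by linarith), ← Real.rpow_mul_natCast (by linarith)]
    norm_num
  have x_le : x ≤ 53 / 20 * (√p * y ^ (p / 2)) := by
    refine le_of_sq_le_sq ?_ (by positivity)
    rw [mul_pow, sq_eq]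
    nlinarith [sq_le_of_tailMass_eq hp hx hy h, sq_eq ▸ sq_nonneg (√p * y ^ (p / 2))]
  nlinarith

theorem gaussian_div_expPow_mul_le (hp : 1 ≤ p) (hx : 0 ≤ x) (hy : 0 < y)
    (h : tailMass φ x = tailMass (expPowDensity p) y) :
    φ x / expPowDensity p y * (p * y ^ (p - 1)) ≤ x + 1 := by
  have hp0 : 0 < p := by positivity
  rw [div_mul_eq_mul_div, div_le_iff₀ ((isSymmDensity_expPowDensity hp0).pos y)]
  calc φ x * (p * y ^ (p - 1)) ≤ (x + 1) * tailMass φ x * (p * y ^ (p - 1)) := by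
        gcongr
        exact gaussianPDFReal_le_mul_tailMass hx
    _ = (x + 1) * (p * y ^ (p - 1) * tailMass (expPowDensity p) y) := by rw [h]; ring
    _ ≤ (x + 1) * expPowDensity p y := by
        gcongr
        exact mul_tailMass_expPowDensity_le hp hy

theorem sqrt_mul_rpow_mul_le_of_one_le (hp : 2 ≤ p) (hx : 0 ≤ x) (hy : 1 ≤ y)
    (h : tailMass φ x = tailMass (expPowDensity p) y) :
    √p * (y ^ (p / 2 - 1) * (φ x / expPowDensity p y)) ≤ 17 / 5 := by
  have hp0 : 0 < p := by positivity
  have hy0 : 0 < y := by positivity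
  have rpow_split : y ^ (p - 1) = y ^ (p / 2 - 1) * y ^ (p / 2) := by
    rw [← Real.rpow_add hy0]
    congr 1
    ring
  refine le_of_mul_le_mul_right ?_ (by positivity : 0 < √p * y ^ (p / 2))
  calc √p * (y ^ (p / 2 - 1) * (φ x / expPowDensity p y)) * (√p * y ^ (p / 2))
      = φ x / expPowDensity p y * (√p * √p * (y ^ (p / 2 - 1) * y ^ (p / 2))) := by ring
    _ = φ x / expPowDensity p y * (p * y ^ (p - 1)) := by
        rw [Real.mul_self_sqrt hp0.le, ← rpow_split]
    _ ≤ x + 1 := gaussian_div_expPow_mul_le (by linarith) hx hy0 h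
    _ ≤ 17 / 5 * (√p * y ^ (p / 2)) := add_one_le_of_tailMass_eq hp hx hy h

theorem gaussian_div_expPow_le_three (hp : 2 ≤ p) (hx : 0 ≤ x) (hy : 0 ≤ y)
    (h : tailMass φ x = tailMass (expPowDensity p) y) : φ x / expPowDensity p y ≤ 3 := by
  have hp0 : 0 < p := by positivity
  have ratio_pos : 0 < φ x / expPowDensity p y :=
    div_pos (isSymmDensity_gaussianPDFReal.pos x) ((isSymmDensity_expPowDensity hp0).pos y)
  rcases le_total 1 y with hy1 | hy1
  · have sqrt_ge : 7 / 5 ≤ √p := Real.le_sqrt_of_sq_le (by linarith)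
    have rpow_ge : 1 ≤ y ^ (p / 2 - 1) := Real.one_le_rpow hy1 (by linarith)
    have : 7 / 5 * (1 * (φ x / expPowDensity p y)) ≤ 17 / 5 :=
      le_trans (by gcongr) (sqrt_mul_rpow_mul_le_of_one_le hp hx hy1 h)
    linarith
  · have density_le : φ x ≤ 2 / 5 := (gaussianPDFReal_le x).trans
      (mul_le_of_le_one_right (by norm_num) (Real.exp_le_one_iff.2 (by nlinarith)))
    have inv_le := inv_expPowDensity_le hp0 (abs_le.2 ⟨by linarith, hy1⟩)
    have mass_le := expPowMass_le_two (one_le_two.trans hp)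
    rw [div_eq_mul_inv] at ratio_pos ⊢
    calc φ x * (expPowDensity p y)⁻¹ ≤ 2 / 5 * (2 * 2.7182818286) := by
          gcongr
          · exact inv_nonneg.2 ((isSymmDensity_expPowDensity hp0).pos y).le
          · refine inv_le.trans ?_
            gcongr
            exact Real.exp_one_lt_d9.le
      _ ≤ 3 := by norm_num

theorem sq_gaussian_div_expPow_le (hp : 1 ≤ p) (hx : 0 ≤ x) (hy : 0 ≤ y) (hy1 : y ≤ 1)
    (h : tailMass φ x = tailMass (expPowDensity p) y) :
    (φ x / expPowDensity p y) ^ 2 ≤ 2 * Real.exp 1 ^ 2 * ((1 - y) + 1 / p) := by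
  have hp0 : 0 < p := by positivity
  have hZ := expPowMass_pos hp0
  have hφ := isSymmDensity_gaussianPDFReal.pos x
  have hg := (isSymmDensity_expPowDensity hp0).pos y
  calc (φ x / expPowDensity p y) ^ 2 ≤ (φ x * (expPowMass p * Real.exp 1)) ^ 2 := by
        rw [div_eq_mul_inv]
        gcongr
        exact inv_expPowDensity_le hp0 (abs_le.2 ⟨by linarith, hy1⟩)
    _ = expPowMass p * Real.exp 1 ^ 2 * (expPowMass p * φ x ^ 2) := by ring
    _ ≤ 2 * Real.exp 1 ^ 2 * (expPowMass p * tailMass (expPowDensity p) y) := by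
        rw [← h]
        gcongr
        exacts [expPowMass_le_two hp, sq_gaussianPDFReal_le_tailMass hx]
    _ ≤ 2 * Real.exp 1 ^ 2 * ((1 - y) + 1 / p) := by
        gcongr
        exact expPowMass_mul_tailMass_le hp hy1

theorem sqrt_mul_rpow_mul_le_of_le_one (hp : 2 ≤ p) (hx : 0 ≤ x) (hy : 0 ≤ y) (hy1 : y ≤ 1)
    (h : tailMass φ x = tailMass (expPowDensity p) y) :
    √p * (y ^ (p / 2 - 1) * (φ x / expPowDensity p y)) ≤ 7 := by
  have hp0 : 0 < p := by positivity
  have rpow_sq : (y ^ (p / 2 - 1)) ^ 2 = y ^ (p - 2) := by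
    rw [← Real.rpow_mul_natCast hy]
    congr 1
    push_cast
    ring
  have weighted : p * (y ^ (p - 2) * ((1 - y) + 1 / p)) ≤ 3 := by
    have expand : p * (y ^ (p - 2) * ((1 - y) + 1 / p)) =
        p * (y ^ (p - 2) * (1 - y)) + y ^ (p - 2) := by field_simp
    have bernoulli := add_one_mul_rpow_mul_one_sub_le_one (sub_nonneg.2 hp) hy hy1
    have rpow_le : y ^ (p - 2) ≤ 1 := Real.rpow_le_one hy hy1 (by linarith)
    have : 0 ≤ y ^ (p - 2) * (1 - y) := mul_nonneg (by positivity) (sub_nonneg.2 hy1)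
    nlinarith
  refine le_of_sq_le_sq ?_ (by norm_num)
  calc (√p * (y ^ (p / 2 - 1) * (φ x / expPowDensity p y))) ^ 2
      = p * (y ^ (p - 2) * (φ x / expPowDensity p y) ^ 2) := by
        rw [mul_pow, mul_pow, Real.sq_sqrt hp0.le, rpow_sq]
    _ ≤ p * (y ^ (p - 2) * (2 * Real.exp 1 ^ 2 * ((1 - y) + 1 / p))) := by
        gcongr
        exact sq_gaussian_div_expPow_le (by linarith) hx hy hy1 h
    _ = 2 * Real.exp 1 ^ 2 * (p * (y ^ (p - 2) * ((1 - y) + 1 / p))) := by ring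
    _ ≤ 2 * 2.7182818286 ^ 2 * 3 := by
        gcongr
        exact Real.exp_one_lt_d9.le
    _ ≤ 7 ^ 2 := by norm_num

theorem sqrt_mul_rpow_mul_le (hp : 2 ≤ p) (hx : 0 ≤ x) (hy : 0 ≤ y)
    (h : tailMass φ x = tailMass (expPowDensity p) y) :
    √p * (y ^ (p / 2 - 1) * (φ x / expPowDensity p y)) ≤ 7 := by
  rcases le_total 1 y with hy1 | hy1
  · linarith [sqrt_mul_rpow_mul_le_of_one_le hp hx hy1 h]
  · exact sqrt_mul_rpow_mul_le_of_le_one hp hx hy hy1 h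

end TailMassEq

/-- The monotone rearrangement of the standard Gaussian density onto `expPowDensity p`. -/
noncomputable def expPowMap (p : ℝ) : ℝ → ℝ := transport φ (expPowDensity p)

variable {p : ℝ}

theorem measurePreserving_expPowMap (hp : 0 < p) :
    MeasurePreserving (expPowMap p) (ProbabilityTheory.gaussianReal 0 1)
      (volume.withDensity fun y => ENNReal.ofReal (expPowDensity p y)) := by
  rw [ProbabilityTheory.gaussianReal_of_var_ne_zero 0 one_ne_zero]
  exact isSymmDensity_gaussianPDFReal.measurePreserving_transport (isSymmDensity_expPowDensity hp)

theorem expPowMap_neg (hp : 0 < p) (x : ℝ) : expPowMap p (-x) = -expPowMap p x :=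
  isSymmDensity_gaussianPDFReal.transport_neg (isSymmDensity_expPowDensity hp) x

theorem expPowMap_nonneg (hp : 0 < p) {x : ℝ} (hx : 0 ≤ x) : 0 ≤ expPowMap p x := by
  have hφ := isSymmDensity_gaussianPDFReal
  have hg := isSymmDensity_expPowDensity hp
  exact (hφ.transport_zero hg).symm.trans_le ((hφ.strictMono_transport hg).monotone hx)

theorem abs_expPowMap (hp : 0 < p) (x : ℝ) : |expPowMap p x| = expPowMap p |x| := by
  rcases le_total 0 x with hx | hx
  · rw [abs_of_nonneg hx, abs_of_nonneg (expPowMap_nonneg hp hx)]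
  · rw [abs_of_nonpos hx, ← abs_of_nonneg (expPowMap_nonneg hp (neg_nonneg.2 hx)),
      expPowMap_neg hp, abs_neg]

theorem hasDerivAt_expPowMap (hp : 0 < p) (x : ℝ) :
    HasDerivAt (expPowMap p) (φ x / expPowDensity p (expPowMap p x)) x :=
  isSymmDensity_gaussianPDFReal.hasDerivAt_transport (isSymmDensity_expPowDensity hp) x

theorem tailMass_expPowMap (hp : 0 < p) (x : ℝ) :
    tailMass φ x = tailMass (expPowDensity p) (expPowMap p x) :=
  (isSymmDensity_gaussianPDFReal.tailMass_transport (isSymmDensity_expPowDensity hp) x).symm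

theorem lipschitzWith_expPowMap (hp : 2 ≤ p) : LipschitzWith 3 (expPowMap p) := by
  have hp0 : 0 < p := by positivity
  have hφ := isSymmDensity_gaussianPDFReal
  have hg := isSymmDensity_expPowDensity hp0
  have speed_abs : ∀ x, φ x / expPowDensity p (expPowMap p x) =
      φ |x| / expPowDensity p (expPowMap p |x|) := fun x => by
    rcases abs_choice x with hx | hx <;> rw [hx]
    rw [expPowMap_neg hp0, hφ.even, hg.even]
  refine lipschitzWith_of_nnnorm_deriv_le
    (fun x => (hasDerivAt_expPowMap hp0 x).differentiableAt) fun x => ?_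
  rw [(hasDerivAt_expPowMap hp0 x).deriv, ← NNReal.coe_le_coe, coe_nnnorm, Real.norm_eq_abs,
    abs_of_pos (div_pos (hφ.pos _) (hg.pos _)), speed_abs]
  exact gaussian_div_expPow_le_three hp (abs_nonneg x) (expPowMap_nonneg hp0 (abs_nonneg x))
    (tailMass_expPowMap hp0 _)

theorem abs_rpow_expPowMap_sub_le (hp : 2 ≤ p) (x x' : ℝ) :
    |(|expPowMap p x| ^ (p / 2) - |expPowMap p x'| ^ (p / 2))| ≤ 7 / 2 * √p * |x - x'| := by
  have hp0 : 0 < p := by positivity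
  have deriv : ∀ z, HasDerivAt (fun z => expPowMap p z ^ (p / 2))
      (φ z / expPowDensity p (expPowMap p z) * (p / 2) * expPowMap p z ^ (p / 2 - 1)) z :=
    fun z => (hasDerivAt_expPowMap hp0 z).rpow_const (.inr (by linarith))
  have deriv_le : ∀ z ∈ Set.Ici (0 : ℝ),
      ‖φ z / expPowDensity p (expPowMap p z) * (p / 2) * expPowMap p z ^ (p / 2 - 1)‖ ≤
        7 / 2 * √p := fun z (hz : 0 ≤ z) => by
    have hw := expPowMap_nonneg hp0 hz
    have ratio_pos := div_pos (isSymmDensity_gaussianPDFReal.pos z)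
      ((isSymmDensity_expPowDensity hp0).pos (expPowMap p z))
    rw [Real.norm_of_nonneg (by positivity)]
    calc φ z / expPowDensity p (expPowMap p z) * (p / 2) * expPowMap p z ^ (p / 2 - 1)
        = √p / 2 * (√p * (expPowMap p z ^ (p / 2 - 1) *
            (φ z / expPowDensity p (expPowMap p z)))) := by
          linear_combination -(φ z / expPowDensity p (expPowMap p z) *
            expPowMap p z ^ (p / 2 - 1) / 2) * Real.mul_self_sqrt hp0.le
      _ ≤ √p / 2 * 7 := by
          gcongr
          exact sqrt_mul_rpow_mul_le hp hz hw (tailMass_expPowMap hp0 z)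
      _ = 7 / 2 * √p := by ring
  rw [abs_expPowMap hp0, abs_expPowMap hp0]
  exact ((convex_Ici 0).norm_image_sub_le_of_norm_hasDerivWithin_le
    (fun z _ => (deriv z).hasDerivWithinAt) deriv_le (abs_nonneg x') (abs_nonneg x)).trans
      (mul_le_mul_of_nonneg_left (abs_abs_sub_abs_le_abs_sub x x') (by positivity))

end GaussianToExpPow

section RadialFactor

/-- The mass `∫₀ᵗ s^(n-1) exp (-N s^p) ds` that a density `exp (-‖y‖_p^p)` on an `n`-dimensional
space puts, in polar coordinates, on an initial segment of a ray; `N` is the value of `‖·‖_p^p` at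
the direction of the ray. Meaningful for `0 < n`. -/
noncomputable def radialMass (n : ℕ) (p N t : ℝ) : ℝ :=
  ∫ s in (0 : ℝ)..t, s ^ (n - 1) * Real.exp (-(N * s ^ p))

/-- The factor by which the radial transport of the product of the densities `expPowDensity p` to
the Lebesgue measure multiplies a vector `y` of `ℝⁿ` with `N = ‖y‖_p^p`. -/
noncomputable def radialFactor (n : ℕ) (p N : ℝ) : ℝ :=
  ((n : ℝ) * radialMass n p N 1) ^ ((1 : ℝ) / n) / expPowMass p

variable {n : ℕ} {p : ℝ}

theorem continuous_radialMass_integrand (hp : 0 ≤ p) (n : ℕ) (N : ℝ) :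
    Continuous fun s : ℝ => s ^ (n - 1) * Real.exp (-(N * s ^ p)) := by
  have : Continuous fun s : ℝ => s ^ p := continuous_id.rpow_const fun _ => Or.inr hp
  fun_prop

theorem hasDerivAt_radialMass (hp : 0 ≤ p) (n : ℕ) (N t : ℝ) :
    HasDerivAt (radialMass n p N) (t ^ (n - 1) * Real.exp (-(N * t ^ p))) t :=
  have hc := continuous_radialMass_integrand hp n N
  intervalIntegral.integral_hasDerivAt_right (hc.intervalIntegrable _ _)
    hc.stronglyMeasurable.stronglyMeasurableAtFilter hc.continuousAt

theorem radialMass_eq_pow_mul (hn : n ≠ 0) (p N : ℝ) {t : ℝ} (ht : 0 ≤ t) :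
    radialMass n p N t = t ^ n * radialMass n p (t ^ p * N) 1 := by
  have hsubst := intervalIntegral.mul_integral_comp_mul_left (a := 0) (b := 1)
    (f := fun s : ℝ => s ^ (n - 1) * Real.exp (-(N * s ^ p))) t
  rw [mul_zero, mul_one] at hsubst
  rw [radialMass, ← hsubst, ← mul_pow_sub_one hn, mul_assoc, radialMass,
    ← intervalIntegral.integral_const_mul (t ^ (n - 1))]
  congr 1
  refine intervalIntegral.integral_congr fun s hs => ?_
  rw [Set.uIcc_of_le zero_le_one] at hs
  simp only [Real.mul_rpow ht hs.1, mul_pow]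
  ring_nf

theorem antitone_radialMass_one (hp : 0 ≤ p) (n : ℕ) : Antitone fun N => radialMass n p N 1 := by
  intro N N' hNN'
  refine intervalIntegral.integral_mono_on zero_le_one
    ((continuous_radialMass_integrand hp n N').intervalIntegrable _ _)
    ((continuous_radialMass_integrand hp n N).intervalIntegrable _ _) fun s hs => ?_
  have hs₀ := hs.1
  have : 0 ≤ s ^ p := Real.rpow_nonneg hs₀ p
  gcongr

theorem exp_neg_sub_mul_radialMass_le (hp : 0 ≤ p) (n : ℕ) {N N' : ℝ} (hNN' : N ≤ N') :
    Real.exp (-(N' - N)) * radialMass n p N 1 ≤ radialMass n p N' 1 := by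
  simp only [radialMass]
  rw [← intervalIntegral.integral_const_mul]
  refine intervalIntegral.integral_mono_on zero_le_one
    ((continuous_const.mul (continuous_radialMass_integrand hp n N)).intervalIntegrable _ _)
    ((continuous_radialMass_integrand hp n N').intervalIntegrable _ _) fun s hs => ?_
  have hs₀ := hs.1
  have hsp : s ^ p ≤ 1 := Real.rpow_le_one hs.1 hs.2 hp
  rw [mul_left_comm, ← Real.exp_add]
  gcongr
  nlinarith

theorem radialMass_pos (hp : 0 ≤ p) (n : ℕ) (N : ℝ) {t : ℝ} (ht : 0 < t) :
    0 < radialMass n p N t := by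
  refine intervalIntegral.intervalIntegral_pos_of_pos_on
    ((continuous_radialMass_integrand hp n N).intervalIntegrable _ _) (fun s hs => ?_) ht
  have hs₀ := hs.1
  positivity

theorem radialMass_nonneg (hp : 0 ≤ p) (n : ℕ) (N : ℝ) {t : ℝ} (ht : 0 ≤ t) :
    0 ≤ radialMass n p N t := by
  obtain rfl | ht := ht.eq_or_lt
  · simp [radialMass]
  · exact (radialMass_pos hp n N ht).le

theorem monotoneOn_radialMass (hp : 0 ≤ p) (n : ℕ) (N : ℝ) :
    MonotoneOn (radialMass n p N) (Set.Ici 0) := by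
  intro s hs t _ hst
  refine intervalIntegral.integral_mono_interval le_rfl hs hst ?_
    ((continuous_radialMass_integrand hp n N).intervalIntegrable _ _)
  filter_upwards [ae_restrict_mem measurableSet_Ioc] with u hu
  have hu₀ := hu.1
  simp only [Pi.zero_apply]
  positivity

theorem mul_radialMass_zero_one (hn : n ≠ 0) (p : ℝ) : (n : ℝ) * radialMass n p 0 1 = 1 := by
  have hn' : (n : ℝ) ≠ 0 := Nat.cast_ne_zero.2 hn
  simp [radialMass, hn, hn', Nat.sub_add_cancel (Nat.one_le_iff_ne_zero.2 hn),
    Nat.cast_pred (Nat.pos_of_ne_zero hn)]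

theorem mul_radialMass_one_le_Gamma (hp : 0 < p) (hn : n ≠ 0) {t : ℝ} (ht : 0 ≤ t) :
    (n : ℝ) * radialMass n p 1 t ≤ Real.Gamma (n / p + 1) := by
  have hn₀ : 0 < (n : ℝ) := by positivity
  have hGamma := integral_rpow_mul_exp_neg_rpow (p := p) (q := (n : ℝ) - 1) hp (by linarith)
  rw [sub_add_cancel] at hGamma
  have hint : IntegrableOn (fun x : ℝ => x ^ ((n : ℝ) - 1) * Real.exp (-x ^ p)) (Set.Ioi 0) :=
    .of_integral_ne_zero (by
      rw [hGamma]; have := Real.Gamma_pos_of_pos (div_pos hn₀ hp); positivity)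
  have hmass : radialMass n p 1 t ≤ 1 / p * Real.Gamma (n / p) := calc
    _ = ∫ s in Set.Ioc 0 t, s ^ ((n : ℝ) - 1) * Real.exp (-s ^ p) := by
        rw [radialMass, intervalIntegral.integral_of_le ht]
        refine setIntegral_congr_fun measurableSet_Ioc fun s _ => ?_
        simp only [one_mul]
        rw [← Real.rpow_natCast, Nat.cast_pred (Nat.pos_of_ne_zero hn)]
    _ ≤ ∫ s in Set.Ioi 0, s ^ ((n : ℝ) - 1) * Real.exp (-s ^ p) := by
        refine setIntegral_mono_set hint ?_ Set.Ioc_subset_Ioi_self.eventuallyLE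
        filter_upwards [ae_restrict_mem measurableSet_Ioi] with s hs
        have hs₀ : 0 < s := hs
        simp only [Pi.zero_apply]
        positivity
    _ = _ := hGamma
  calc (n : ℝ) * radialMass n p 1 t ≤ n * (1 / p * Real.Gamma (n / p)) := by gcongr
    _ = Real.Gamma (n / p + 1) := by rw [Real.Gamma_add_one (by positivity)]; ring

theorem radialFactor_pos (hp : 0 < p) (hn : n ≠ 0) (N : ℝ) : 0 < radialFactor n p N := by
  have hmass := radialMass_pos hp.le n N zero_lt_one
  have hZ := expPowMass_pos hp
  unfold radialFactor
  positivity

theorem antitone_radialFactor (hp : 0 < p) (n : ℕ) : Antitone (radialFactor n p) := by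
  intro N N' hNN'
  have hmass := radialMass_pos hp.le n N' zero_lt_one
  have hanti : radialMass n p N' 1 ≤ radialMass n p N 1 := antitone_radialMass_one hp.le n hNN'
  have hZ := expPowMass_pos hp
  unfold radialFactor
  gcongr

theorem radialFactor_le (hp : 0 < p) (hn : n ≠ 0) {N : ℝ} (hN : 0 ≤ N) :
    radialFactor n p N ≤ (expPowMass p)⁻¹ := by
  refine (antitone_radialFactor hp n hN).trans_eq ?_
  rw [radialFactor, mul_radialMass_zero_one hn, Real.one_rpow, one_div]

theorem radialFactor_sub_le (hp : 0 < p) (hn : n ≠ 0) {N N' : ℝ} (hNN' : N ≤ N') :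
    radialFactor n p N - radialFactor n p N' ≤ radialFactor n p N * ((N' - N) / n) := by
  have hZ := expPowMass_pos hp
  have hmass := radialMass_pos hp.le n N zero_lt_one
  have hexp : radialFactor n p N * Real.exp (-((N' - N) / n)) ≤ radialFactor n p N' := calc
    _ = (n * (Real.exp (-(N' - N)) * radialMass n p N 1)) ^ ((1 : ℝ) / n) / expPowMass p := by
        have hroot : Real.exp (-((N' - N) / n)) = Real.exp (-(N' - N)) ^ ((1 : ℝ) / n) := by
          rw [← Real.exp_mul]; ring_nf
        rw [radialFactor, hroot, div_mul_eq_mul_div,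
          ← Real.mul_rpow (by positivity) (by positivity)]
        ring_nf
    _ ≤ radialFactor n p N' := by
        unfold radialFactor
        gcongr
        exact exp_neg_sub_mul_radialMass_le hp.le n hNN'
  nlinarith [Real.add_one_le_exp (-((N' - N) / n)), radialFactor_pos hp hn N]

theorem radialFactor_rpow_mul_mul (hp : 0 < p) (hn : n ≠ 0) (N : ℝ) {t : ℝ} (ht : 0 ≤ t) :
    radialFactor n p (t ^ p * N) * t =
      ((n : ℝ) * radialMass n p N t) ^ ((1 : ℝ) / n) / expPowMass p := by
  have hmass := radialMass_pos hp.le n (t ^ p * N) zero_lt_one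
  have hroot : (t ^ n) ^ ((1 : ℝ) / n) = t := by rw [one_div, Real.pow_rpow_inv_natCast ht hn]
  rw [radialMass_eq_pow_mul hn p N ht, mul_left_comm,
    Real.mul_rpow (by positivity) (by positivity), hroot, radialFactor]
  ring

theorem monotoneOn_radialFactor_rpow_mul (hp : 0 < p) (hn : n ≠ 0) :
    MonotoneOn (fun t => radialFactor n p (t ^ p) * t) (Set.Ici 0) := by
  intro s hs t ht hst
  have hmass := radialMass_nonneg hp.le n 1 hs
  have hmono := monotoneOn_radialMass hp.le n 1 hs ht hst
  have hZ := expPowMass_pos hp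
  have hs' := radialFactor_rpow_mul_mul hp hn 1 hs
  have ht' := radialFactor_rpow_mul_mul hp hn 1 ht
  rw [mul_one] at hs' ht'
  simp only [hs', ht']
  gcongr

theorem rpow_two_div_rpow (hp : p ≠ 0) {M : ℝ} (hM : 0 ≤ M) : (M ^ (2 / p)) ^ p = M ^ 2 := by
  rw [← Real.rpow_mul hM, div_mul_cancel₀ _ hp, Real.rpow_two]

theorem one_sub_mul_div_le_rpow {M M' q : ℝ} (hM : 0 < M) (hM' : 0 < M') (hq : 0 ≤ q) :
    1 - q * ((M' - M) / M) ≤ (M / M') ^ q := by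
  have hlog : Real.log (M' / M) ≤ (M' - M) / M :=
    (Real.log_le_sub_one_of_pos (by positivity)).trans_eq (by field_simp)
  calc 1 - q * ((M' - M) / M) ≤ -Real.log (M' / M) * q + 1 := by nlinarith
    _ ≤ Real.exp (-Real.log (M' / M) * q) := Real.add_one_le_exp _
    _ = (M / M') ^ q := by
        rw [Real.exp_mul, Real.exp_neg, Real.exp_log (by positivity), inv_div]

theorem radialFactor_sq_sub_le (hp : 0 < p) (hn : n ≠ 0) {M M' : ℝ} (hM : 0 < M)
    (hMM' : M ≤ M') :
    radialFactor n p (M ^ 2) - radialFactor n p (M' ^ 2) ≤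
      radialFactor n p (M ^ 2) * (2 / p * ((M' - M) / M)) := by
  have hM' : 0 < M' := hM.trans_le hMM'
  have hmono : radialFactor n p (M ^ 2) * M ^ (2 / p) ≤
      radialFactor n p (M' ^ 2) * M' ^ (2 / p) := by
    have h := monotoneOn_radialFactor_rpow_mul hp hn (Real.rpow_nonneg hM.le (2 / p))
      (Real.rpow_nonneg hM'.le (2 / p)) (by gcongr)
    simpa only [rpow_two_div_rpow hp.ne' hM.le, rpow_two_div_rpow hp.ne' hM'.le] using h
  have hratio : radialFactor n p (M ^ 2) * (M / M') ^ (2 / p) ≤ radialFactor n p (M' ^ 2) := by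
    rwa [Real.div_rpow hM.le hM'.le, ← mul_div_assoc, div_le_iff₀ (by positivity)]
  nlinarith [one_sub_mul_div_le_rpow hM hM' (show 0 ≤ 2 / p by positivity),
    radialFactor_pos hp hn (M ^ 2)]

end RadialFactor

section RadialEstimate

variable {n : ℕ} {p M M' : ℝ}

theorem sqrt_div_rpow_mul_le (hp : 1 ≤ p) (n : ℕ) :
    √n / (n : ℝ) ^ (1 / p) * (√n / √p) ^ (2 / p) ≤ √n := by
  obtain rfl | hn := eq_or_ne n 0
  · simp
  have hpow : (√n / √p) ^ (2 / p) ≤ (n : ℝ) ^ (1 / p) := calc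
    _ ≤ √(n : ℝ) ^ (2 / p) := by
        have : 0 < p := by linarith
        gcongr
        exact div_le_self (Real.sqrt_nonneg _) (Real.one_le_sqrt.2 hp)
    _ = (n : ℝ) ^ (1 / p) := by
        rw [Real.sqrt_eq_rpow, ← Real.rpow_mul n.cast_nonneg]; ring_nf
  calc _ ≤ √n / (n : ℝ) ^ (1 / p) * (n : ℝ) ^ (1 / p) := by gcongr
    _ = √n := div_mul_cancel₀ _ (by positivity)

theorem radialFactor_sub_mul_le_of_le (hp : 1 ≤ p) (hn : n ≠ 0) (hM : 0 ≤ M) (hMM' : M ≤ M')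
    (hM' : M' ≤ √n / √p) :
    (radialFactor n p (M ^ 2) - radialFactor n p (M' ^ 2)) *
        (√n / (n : ℝ) ^ (1 / p) * M ^ (2 / p)) ≤
      2 / √p * (expPowMass p)⁻¹ * (M' - M) := by
  have hp₀ : 0 < p := by linarith
  have hZ := expPowMass_pos hp₀
  have := radialFactor_pos hp₀ hn (M ^ 2)
  have : 0 ≤ M' - M := sub_nonneg.2 hMM'
  have hsum : 0 ≤ M' + M := by linarith
  have hMm : M ≤ √n / √p := hMM'.trans hM'
  calc _ ≤ radialFactor n p (M ^ 2) * ((M' ^ 2 - M ^ 2) / n) *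
          (√n / (n : ℝ) ^ (1 / p) * M ^ (2 / p)) := by
        gcongr
        exact radialFactor_sub_le hp₀ hn (by gcongr)
    _ = radialFactor n p (M ^ 2) *
          ((M' - M) * (M' + M) / n * (√n / (n : ℝ) ^ (1 / p) * M ^ (2 / p))) := by ring
    _ ≤ (expPowMass p)⁻¹ * ((M' - M) * (√n / √p + √n / √p) / n *
          (√n / (n : ℝ) ^ (1 / p) * (√n / √p) ^ (2 / p))) := by
        gcongr
        exact radialFactor_le hp₀ hn (sq_nonneg M)
    _ ≤ (expPowMass p)⁻¹ * ((M' - M) * (√n / √p + √n / √p) / n * √n) := by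
        gcongr
        exact sqrt_div_rpow_mul_le hp n
    _ = _ := by
        have hsq : √(n : ℝ) ^ 2 = n := Real.sq_sqrt n.cast_nonneg
        field_simp
        rw [hsq]
        ring

theorem radialFactor_sub_mul_le_of_ge (hp : 2 ≤ p) (hn : n ≠ 0) (hM : √n / √p ≤ M)
    (hMM' : M ≤ M') :
    (radialFactor n p (M ^ 2) - radialFactor n p (M' ^ 2)) *
        (√n / (n : ℝ) ^ (1 / p) * M ^ (2 / p)) ≤
      2 / √p * (expPowMass p)⁻¹ * (M' - M) := by
  have hp₀ : 0 < p := by linarith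
  have hZ := expPowMass_pos hp₀
  have := radialFactor_pos hp₀ hn (M ^ 2)
  have hm₀ : 0 < √n / √p := by positivity
  have hM₀ : 0 < M := hm₀.trans_le hM
  have : 0 ≤ M' - M := sub_nonneg.2 hMM'
  have hdecr : M ^ (2 / p) / M ≤ (√n / √p) ^ (2 / p) / (√n / √p) := by
    rw [← Real.rpow_sub_one hM₀.ne', ← Real.rpow_sub_one hm₀.ne']
    exact Real.rpow_le_rpow_of_nonpos hm₀ hM (sub_nonpos.2 ((div_le_one hp₀).2 hp))
  calc _ ≤ radialFactor n p (M ^ 2) * (2 / p * ((M' - M) / M)) *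
          (√n / (n : ℝ) ^ (1 / p) * M ^ (2 / p)) := by
        gcongr
        exact radialFactor_sq_sub_le hp₀ hn hM₀ hMM'
    _ = radialFactor n p (M ^ 2) *
          (2 / p * (M' - M) * (√n / (n : ℝ) ^ (1 / p) * (M ^ (2 / p) / M))) := by ring
    _ ≤ (expPowMass p)⁻¹ * (2 / p * (M' - M) *
          (√n / (n : ℝ) ^ (1 / p) * ((√n / √p) ^ (2 / p) / (√n / √p)))) := by
        gcongr
        exact radialFactor_le hp₀ hn (sq_nonneg M)
    _ = (expPowMass p)⁻¹ * (2 / p * (M' - M) *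
          ((√n / (n : ℝ) ^ (1 / p) * (√n / √p) ^ (2 / p)) / (√n / √p))) := by ring
    _ ≤ (expPowMass p)⁻¹ * (2 / p * (M' - M) * (√n / (√n / √p))) := by
        gcongr
        exact sqrt_div_rpow_mul_le (by linarith) n
    _ = _ := by
        have hsq : √p ^ 2 = p := Real.sq_sqrt hp₀.le
        field_simp
        rw [hsq, mul_comm]

-- The bounds `radialFactor_sub_le` and `radialFactor_sq_sub_le` cross over at `M = √n / √p`.
theorem radialFactor_sub_mul_le (hp : 2 ≤ p) (hn : n ≠ 0) (hM : 0 ≤ M) (hMM' : M ≤ M') :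
    (radialFactor n p (M ^ 2) - radialFactor n p (M' ^ 2)) *
        (√n / (n : ℝ) ^ (1 / p) * M ^ (2 / p)) ≤
      2 / √p * (expPowMass p)⁻¹ * (M' - M) := by
  have hp₁ : 1 ≤ p := by linarith
  obtain hmM | hMm := le_total (√n / √p) M
  · exact radialFactor_sub_mul_le_of_ge hp hn hmM hMM'
  obtain hM'm | hmM' := le_total M' (√n / √p)
  · exact radialFactor_sub_mul_le_of_le hp₁ hn hM hMM' hM'm
  have hbelow := radialFactor_sub_mul_le_of_le hp₁ hn hM hMm le_rfl
  have habove := radialFactor_sub_mul_le_of_ge hp hn le_rfl hmM'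
  have hanti : 0 ≤ radialFactor n p ((√n / √p) ^ 2) - radialFactor n p (M' ^ 2) :=
    sub_nonneg.2 (antitone_radialFactor (by linarith) n (by gcongr))
  have hgrow : (radialFactor n p ((√n / √p) ^ 2) - radialFactor n p (M' ^ 2)) *
        (√n / (n : ℝ) ^ (1 / p) * M ^ (2 / p)) ≤
      (radialFactor n p ((√n / √p) ^ 2) - radialFactor n p (M' ^ 2)) *
        (√n / (n : ℝ) ^ (1 / p) * (√n / √p) ^ (2 / p)) := by
    have : 0 < p := by linarith
    gcongr
  linarith

end RadialEstimate

section Coordinatewise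

variable {ι : Type*} [Fintype ι]

/-- The map of `EuclideanSpace ℝ ι` that applies `f` to every coordinate. -/
noncomputable def coordMap (f : ℝ → ℝ) (x : EuclideanSpace ℝ ι) : EuclideanSpace ℝ ι :=
  WithLp.toLp 2 fun i => f (x i)

theorem norm_coordMap_sub_le {f : ℝ → ℝ} {L : ℝ} (hf : ∀ s t, |f s - f t| ≤ L * |s - t|)
    (x y : EuclideanSpace ℝ ι) : ‖coordMap f x - coordMap f y‖ ≤ L * ‖x - y‖ := by
  have hL : 0 ≤ L := by simpa using (abs_nonneg _).trans (hf 1 0)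
  refine le_of_sq_le_sq ?_ (by positivity)
  rw [mul_pow, EuclideanSpace.norm_sq_eq, EuclideanSpace.norm_sq_eq, Finset.mul_sum]
  refine Finset.sum_le_sum fun i _ => ?_
  rw [← mul_pow]
  exact pow_le_pow_left₀ (norm_nonneg _) (by simpa [coordMap] using hf (x i) (y i)) 2

theorem measurePreserving_coordMap_stdGaussian {n : ℕ} {f : ℝ → ℝ} {ν : Measure ℝ} [SigmaFinite ν]
    (hf : MeasurePreserving f (ProbabilityTheory.gaussianReal 0 1) ν) :
    MeasurePreserving (coordMap f) (stdGaussian n)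
      ((Measure.pi fun _ : Fin n => ν).map (WithLp.toLp 2)) :=
  ((WithLp.measurable_toLp 2 _).measurePreserving _).comp
    ((measurePreserving_pi _ _ fun _ => hf).comp (measurePreserving_ofLp_stdGaussian n))

end Coordinatewise

section PowSum

/-- The `p`-th power of the `ℓ_p` norm of a vector. -/
noncomputable def powSum {ι : Type*} [Fintype ι] (p : ℝ) (y : EuclideanSpace ℝ ι) : ℝ :=
  ∑ i, |y i| ^ p

variable {ι : Type*} [Fintype ι] {p : ℝ}

theorem powSum_nonneg (p : ℝ) (y : EuclideanSpace ℝ ι) : 0 ≤ powSum p y :=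
  Finset.sum_nonneg fun _ _ => by positivity

theorem continuous_powSum (hp : 0 ≤ p) :
    Continuous (powSum p : EuclideanSpace ℝ ι → ℝ) :=
  continuous_finsetSum _ fun i _ =>
    (PiLp.continuous_apply 2 _ i).abs.rpow_const fun _ => Or.inr hp

theorem powSum_smul (p : ℝ) {t : ℝ} (ht : 0 ≤ t) (y : EuclideanSpace ℝ ι) :
    powSum p (t • y) = t ^ p * powSum p y := by
  simp only [powSum, PiLp.smul_apply, smul_eq_mul, abs_mul, abs_of_nonneg ht,
    Real.mul_rpow ht (abs_nonneg _), Finset.mul_sum]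

theorem norm_coordMap_abs_rpow_sq (p : ℝ) (y : EuclideanSpace ℝ ι) :
    ‖coordMap (fun t => |t| ^ (p / 2)) y‖ ^ 2 = powSum p y := by
  rw [EuclideanSpace.norm_sq_eq]
  refine Finset.sum_congr rfl fun i _ => ?_
  rw [coordMap, Real.norm_of_nonneg (by positivity), ← Real.rpow_natCast,
    ← Real.rpow_mul (abs_nonneg _), Nat.cast_ofNat, div_mul_cancel₀ _ two_ne_zero]

theorem norm_rpow_le_mul_powSum (hp : 2 ≤ p) (y : EuclideanSpace ℝ ι) :
    ‖y‖ ^ p ≤ (Fintype.card ι : ℝ) ^ (p / 2 - 1) * powSum p y := by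
  have hsq (a : ℝ) (ha : 0 ≤ a) : (a ^ 2) ^ (p / 2) = a ^ p := by
    rw [← Real.rpow_natCast, ← Real.rpow_mul ha, Nat.cast_ofNat, mul_div_cancel₀ _ two_ne_zero]
  have hmean := Real.rpow_sum_le_const_mul_sum_rpow Finset.univ (fun i => y i ^ 2)
    (show 1 ≤ p / 2 by linarith)
  simp only [abs_pow, hsq _ (abs_nonneg _), Finset.card_univ] at hmean
  rwa [← hsq _ (norm_nonneg y), EuclideanSpace.norm_sq_eq]

theorem norm_le_sqrt_div_rpow_mul (hp : 2 ≤ p) [Nonempty ι] (y : EuclideanSpace ℝ ι) :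
    ‖y‖ ≤ √(Fintype.card ι) / (Fintype.card ι : ℝ) ^ (1 / p) *
      ‖coordMap (fun t => |t| ^ (p / 2)) y‖ ^ (2 / p) := by
  have hp₀ : 0 < p := by linarith
  have hcard : (0 : ℝ) < Fintype.card ι := by positivity
  refine (Real.rpow_le_rpow_iff (norm_nonneg y) (by positivity) hp₀).1 ?_
  rw [Real.mul_rpow (by positivity) (by positivity), rpow_two_div_rpow hp₀.ne' (norm_nonneg _),
    norm_coordMap_abs_rpow_sq]
  refine (norm_rpow_le_mul_powSum hp y).trans_eq ?_
  rw [Real.div_rpow (by positivity) (by positivity), ← Real.rpow_mul hcard.le,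
    one_div_mul_cancel hp₀.ne', Real.sqrt_eq_rpow, ← Real.rpow_mul hcard.le, ← Real.rpow_sub hcard]
  ring_nf

end PowSum

section RadialMap

variable {n : ℕ} {p : ℝ}

/-- The radial map of `ℝⁿ` that transports the product of the densities `expPowDensity p` to the
uniform measure on a centred `ℓ_p` ball. -/
noncomputable def radialMap (p : ℝ) (y : EuclideanSpace ℝ (Fin n)) : EuclideanSpace ℝ (Fin n) :=
  radialFactor n p (powSum p y) • y

theorem measurable_radialMap (hp : 0 < p) :
    Measurable (radialMap p : EuclideanSpace ℝ (Fin n) → EuclideanSpace ℝ (Fin n)) :=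
  ((antitone_radialFactor hp n).measurable.comp (continuous_powSum hp.le).measurable).smul
    measurable_id

theorem norm_radialMap_sub_le (hp : 2 ≤ p) (hn : n ≠ 0) {y y' : EuclideanSpace ℝ (Fin n)} :
    ‖radialMap p y - radialMap p y'‖ ≤ (expPowMass p)⁻¹ * (‖y - y'‖ + 2 / √p *
      ‖coordMap (fun t => |t| ^ (p / 2)) y - coordMap (fun t => |t| ^ (p / 2)) y'‖) := by
  set ψ : EuclideanSpace ℝ (Fin n) → EuclideanSpace ℝ (Fin n) := coordMap fun t => |t| ^ (p / 2)
  wlog hle : ‖ψ y‖ ≤ ‖ψ y'‖ generalizing y y'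
  · simpa only [norm_sub_rev] using this (le_of_not_ge hle)
  have hp₀ : 0 < p := by linarith
  have hZ := expPowMass_pos hp₀
  have : Nonempty (Fin n) := Fin.pos_iff_nonempty.1 (Nat.pos_of_ne_zero hn)
  have hK := radialFactor_pos hp₀ hn (‖ψ y'‖ ^ 2)
  have hd : 0 ≤ radialFactor n p (‖ψ y‖ ^ 2) - radialFactor n p (‖ψ y'‖ ^ 2) :=
    sub_nonneg.2 (antitone_radialFactor hp₀ n (by gcongr))
  have hy : ‖y‖ ≤ √n / (n : ℝ) ^ (1 / p) * ‖ψ y‖ ^ (2 / p) := by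
    simpa using norm_le_sqrt_div_rpow_mul hp y
  calc ‖radialMap p y - radialMap p y'‖
      = ‖radialFactor n p (‖ψ y'‖ ^ 2) • (y - y') +
          (radialFactor n p (‖ψ y‖ ^ 2) - radialFactor n p (‖ψ y'‖ ^ 2)) • y‖ := by
        simp only [radialMap, ← norm_coordMap_abs_rpow_sq, ψ, smul_sub, sub_smul]
        abel_nf
    _ ≤ radialFactor n p (‖ψ y'‖ ^ 2) * ‖y - y'‖ +
          (radialFactor n p (‖ψ y‖ ^ 2) - radialFactor n p (‖ψ y'‖ ^ 2)) * ‖y‖ := by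
        refine (norm_add_le _ _).trans_eq ?_
        rw [norm_smul, norm_smul, Real.norm_of_nonneg hK.le, Real.norm_of_nonneg hd]
    _ ≤ (expPowMass p)⁻¹ * ‖y - y'‖ + 2 / √p * (expPowMass p)⁻¹ * (‖ψ y'‖ - ‖ψ y‖) := by
        refine add_le_add ?_ (le_trans ?_ (radialFactor_sub_mul_le hp hn (norm_nonneg _) hle))
        · gcongr
          exact radialFactor_le hp₀ hn (sq_nonneg _)
        · gcongr
    _ ≤ (expPowMass p)⁻¹ * ‖y - y'‖ + 2 / √p * (expPowMass p)⁻¹ * ‖ψ y - ψ y'‖ := by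
        rw [norm_sub_rev (ψ y)]
        gcongr
        exact norm_sub_norm_le _ _
    _ = _ := by ring

theorem inv_expPowMass_le (hp : 0 < p) : (expPowMass p)⁻¹ ≤ 7 / 5 := by
  refine (inv_anti₀ (by positivity) (two_mul_exp_neg_one_le_expPowMass hp)).trans ?_
  rw [mul_inv, Real.exp_neg, inv_inv]
  linarith [Real.exp_one_lt_d9]

theorem lipschitzWith_radialMap_comp_coordMap_expPowMap (hp : 2 ≤ p) (hn : n ≠ 0) :
    LipschitzWith 14 (radialMap p ∘ coordMap (expPowMap p) :
      EuclideanSpace ℝ (Fin n) → EuclideanSpace ℝ (Fin n)) := by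
  have hp₀ : 0 < p := by linarith
  have hZ := expPowMass_pos hp₀
  refine LipschitzWith.of_dist_le_mul fun x x' => ?_
  have hcoord : ‖coordMap (expPowMap p) x - coordMap (expPowMap p) x'‖ ≤ 3 * ‖x - x'‖ :=
    norm_coordMap_sub_le (fun s t => (lipschitzWith_expPowMap hp).dist_le_mul s t) x x'
  have hpow := norm_coordMap_sub_le (abs_rpow_expPowMap_sub_le hp) x x'
  rw [dist_eq_norm, dist_eq_norm]
  calc _ ≤ (expPowMass p)⁻¹ * (3 * ‖x - x'‖ + 2 / √p * (7 / 2 * √p * ‖x - x'‖)) := by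
        refine (norm_radialMap_sub_le hp hn).trans ?_
        gcongr
        exact hpow
    _ = (expPowMass p)⁻¹ * (10 * ‖x - x'‖) := by field_simp; ring
    _ ≤ 7 / 5 * (10 * ‖x - x'‖) := by
        gcongr
        exact inv_expPowMass_le hp₀
    _ = 14 * ‖x - x'‖ := by ring

end RadialMap

section Polar

variable {E : Type*} [NormedAddCommGroup E] [NormedSpace ℝ E] [FiniteDimensional ℝ E]
  [MeasurableSpace E] [BorelSpace E] {μ : Measure E} [μ.IsAddHaarMeasure]

theorem lintegral_eq_lintegral_toSphere [Nontrivial E] {F : E → ℝ≥0∞} (hF : Measurable F) :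
    ∫⁻ x, F x ∂μ = ∫⁻ y : Metric.sphere (0 : E) 1, ∫⁻ t in Set.Ioi (0 : ℝ),
      ENNReal.ofReal (t ^ (Module.finrank ℝ E - 1)) * F (t • (y : E)) ∂volume ∂μ.toSphere := by
  have hsmul : Measurable fun q : Metric.sphere (0 : E) 1 × Set.Ioi (0 : ℝ) =>
      F (q.2.1 • q.1.1) := hF.comp (by fun_prop)
  calc ∫⁻ x, F x ∂μ = ∫⁻ x : ({0}ᶜ : Set E), F x ∂μ.comap (↑) := by
        rw [lintegral_subtype_comap (measurableSet_singleton _).compl, restrict_compl_singleton]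
    _ = ∫⁻ x : ({0}ᶜ : Set E), F ((homeomorphUnitSphereProd E x).2.1 •
          (homeomorphUnitSphereProd E x).1.1) ∂μ.comap (↑) := by
        refine lintegral_congr fun x => ?_
        rw [← homeomorphUnitSphereProd_symm_apply_coe, Homeomorph.symm_apply_apply]
    _ = ∫⁻ q : Metric.sphere (0 : E) 1 × Set.Ioi (0 : ℝ), F (q.2.1 • q.1.1)
          ∂μ.toSphere.prod (Measure.volumeIoiPow (Module.finrank ℝ E - 1)) :=
        μ.measurePreserving_homeomorphUnitSphereProd.lintegral_comp hsmul
    _ = _ := by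
        rw [lintegral_prod _ hsmul.aemeasurable]
        refine lintegral_congr fun y => ?_
        have hray : Measurable fun t : Set.Ioi (0 : ℝ) => F (t.1 • y.1) := hF.comp (by fun_prop)
        rw [Measure.volumeIoiPow, lintegral_withDensity_eq_lintegral_mul _ (by fun_prop) hray]
        exact lintegral_subtype_comap measurableSet_Ioi
          fun t => ENNReal.ofReal (t ^ (Module.finrank ℝ E - 1)) * F (t • (y : E))

theorem setLIntegral_Ioi_deriv_mul_comp_le {τ τ' : ℝ → ℝ} (hτ : ∀ t > 0, 0 < τ t)
    (hτ' : ∀ t > 0, 0 < τ' t) (hderiv : ∀ t > 0, HasDerivAt τ (τ' t) t) (f : ℝ → ℝ≥0∞) :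
    ∫⁻ t in Set.Ioi 0, ENNReal.ofReal (τ' t) * f (τ t) ≤ ∫⁻ t in Set.Ioi 0, f t := by
  have hinj : Set.InjOn τ (Set.Ioi 0) := by
    refine StrictMonoOn.injOn (strictMonoOn_of_deriv_pos (convex_Ioi 0)
      (fun t ht => (hderiv t ht).continuousAt.continuousWithinAt) fun t ht => ?_)
    rw [interior_Ioi] at ht
    rw [(hderiv t ht).deriv]
    exact hτ' t ht
  calc ∫⁻ t in Set.Ioi 0, ENNReal.ofReal (τ' t) * f (τ t)
      = ∫⁻ t in Set.Ioi 0, ENNReal.ofReal |τ' t| * f (τ t) :=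
        setLIntegral_congr_fun measurableSet_Ioi fun t ht => by
          simp only [abs_of_pos (hτ' t ht)]
    _ = ∫⁻ t in τ '' Set.Ioi 0, f t :=
        (lintegral_image_eq_lintegral_abs_deriv_mul measurableSet_Ioi
          (fun t ht => (hderiv t ht).hasDerivWithinAt) hinj f).symm
    _ ≤ ∫⁻ t in Set.Ioi 0, f t := lintegral_mono_set (Set.image_subset_iff.2 hτ)

theorem map_withDensity_le_of_radial [Nontrivial E] {T : E → E} {ρ : E → ℝ} {τ τ' : E → ℝ → ℝ}
    (hT : Measurable T) (hρ : Measurable ρ) (hτ : ∀ y, ∀ t > 0, 0 < τ y t)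
    (hτ' : ∀ y, ∀ t > 0, 0 < τ' y t) (hderiv : ∀ y, ∀ t > 0, HasDerivAt (τ y) (τ' y t) t)
    (hTτ : ∀ y, ∀ t > 0, T (t • y) = τ y t • y)
    (hjac : ∀ y, ∀ t > 0, τ' y t * τ y t ^ (Module.finrank ℝ E - 1) =
      t ^ (Module.finrank ℝ E - 1) * ρ (t • y)) :
    (μ.withDensity fun y => ENNReal.ofReal (ρ y)).map T ≤ μ := by
  refine Measure.le_iff.2 fun A hA => ?_
  have hI : Measurable (A.indicator (1 : E → ℝ≥0∞)) := measurable_one.indicator hA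
  have hIT : Measurable fun y => A.indicator (1 : E → ℝ≥0∞) (T y) := hI.comp hT
  rw [← lintegral_indicator_one hA, ← lintegral_indicator_one hA, lintegral_map hI hT,
    lintegral_withDensity_eq_lintegral_mul _ hρ.ennreal_ofReal hIT,
    lintegral_eq_lintegral_toSphere (hρ.ennreal_ofReal.mul hIT),
    lintegral_eq_lintegral_toSphere hI]
  refine lintegral_mono fun y => le_trans (le_of_eq ?_) (setLIntegral_Ioi_deriv_mul_comp_le
    (hτ y) (hτ' y) (hderiv y) fun t => ENNReal.ofReal (t ^ (Module.finrank ℝ E - 1)) *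
      A.indicator 1 (t • (y : E)))
  refine setLIntegral_congr_fun measurableSet_Ioi fun t ht => ?_
  have ht₀ : 0 < t := ht
  simp only [Pi.mul_apply, ← mul_assoc, hTτ y t ht]
  rw [← ENNReal.ofReal_mul (by positivity), ← ENNReal.ofReal_mul (hτ' y t ht).le, hjac y t ht]

end Polar

section RadialTransport

variable {n : ℕ} {p : ℝ}

theorem rpow_one_div_sub_one_mul_pow (hn : n ≠ 0) {u : ℝ} (hu : 0 < u) :
    u ^ ((1 : ℝ) / n - 1) * (u ^ ((1 : ℝ) / n)) ^ (n - 1) = 1 := by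
  have hn₀ : (n : ℝ) ≠ 0 := Nat.cast_ne_zero.2 hn
  have hexp : (1 : ℝ) / n - 1 + 1 / n * (n - 1 : ℕ) = 0 := by
    rw [Nat.cast_pred (Nat.pos_of_ne_zero hn)]
    field_simp
    ring
  rw [← Real.rpow_natCast, ← Real.rpow_mul hu.le, ← Real.rpow_add hu, hexp, Real.rpow_zero]

theorem hasDerivAt_rpow_radialMass (hp : 0 ≤ p) (hn : n ≠ 0) (N : ℝ) {t : ℝ} (ht : 0 < t) :
    HasDerivAt (fun t => ((n : ℝ) * radialMass n p N t) ^ ((1 : ℝ) / n))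
      (t ^ (n - 1) * Real.exp (-(N * t ^ p)) *
        ((n : ℝ) * radialMass n p N t) ^ ((1 : ℝ) / n - 1)) t := by
  have hG := radialMass_pos hp n N ht
  have hn₀ : (n : ℝ) ≠ 0 := Nat.cast_ne_zero.2 hn
  convert! ((hasDerivAt_radialMass hp n N t).const_mul (n : ℝ)).rpow_const
    (p := (1 : ℝ) / n) (Or.inl (by positivity)) using 1
  field_simp

theorem map_radialMap_withDensity_le (hp : 0 < p) (hn : n ≠ 0) :
    (volume.withDensity fun y : EuclideanSpace ℝ (Fin n) => ENNReal.ofReal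
      ((expPowMass p)⁻¹ ^ n * Real.exp (-powSum p y))).map (radialMap p) ≤ volume := by
  have hZ := expPowMass_pos hp
  have hnpos := Nat.pos_of_ne_zero hn
  have : Nonempty (Fin n) := Fin.pos_iff_nonempty.1 hnpos
  have hu (y : EuclideanSpace ℝ (Fin n)) (t : ℝ) (ht : 0 < t) :
      0 < (n : ℝ) * radialMass n p (powSum p y) t :=
    mul_pos (Nat.cast_pos.2 hnpos) (radialMass_pos hp.le n _ ht)
  refine map_withDensity_le_of_radial
    (τ := fun y t => ((n : ℝ) * radialMass n p (powSum p y) t) ^ ((1 : ℝ) / n) / expPowMass p)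
    (measurable_radialMap hp)
    ((continuous_powSum hp.le).measurable.neg.exp.const_mul _)
    (fun y t ht => ?_) (fun y t ht => ?_)
    (fun y t ht => (hasDerivAt_rpow_radialMass hp.le hn _ ht).div_const _)
    (fun y t ht => ?_) (fun y t ht => ?_)
  · have := hu y t ht
    positivity
  · have := hu y t ht
    positivity
  · rw [radialMap, powSum_smul p ht.le, smul_smul, radialFactor_rpow_mul_mul hp hn _ ht.le]
  · rw [finrank_euclideanSpace_fin, powSum_smul p ht.le, mul_comm (t ^ p),
      ← mul_pow_sub_one hn (expPowMass p)⁻¹, div_pow]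
    linear_combination (t ^ (n - 1) * Real.exp (-(powSum p y * t ^ p)) *
      (expPowMass p)⁻¹ * (expPowMass p)⁻¹ ^ (n - 1)) *
        rpow_one_div_sub_one_mul_pow hn (hu y t ht)

theorem map_toLp_pi_withDensity_expPowDensity (hp : 0 < p) (n : ℕ) :
    (Measure.pi fun _ : Fin n => volume.withDensity fun y =>
        ENNReal.ofReal (expPowDensity p y)).map (WithLp.toLp 2) =
      volume.withDensity fun y : EuclideanSpace ℝ (Fin n) => ENNReal.ofReal
        ((expPowMass p)⁻¹ ^ n * Real.exp (-powSum p y)) := by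
  have hdens := isSymmDensity_expPowDensity hp
  have hmeas := hdens.continuous.measurable.ennreal_ofReal
  have hprod (y : Fin n → ℝ) : ∏ i, ENNReal.ofReal (expPowDensity p (y i)) =
      ENNReal.ofReal ((expPowMass p)⁻¹ ^ n * Real.exp (-powSum p (WithLp.toLp 2 y))) := by
    rw [← ENNReal.ofReal_prod_of_nonneg fun i _ => (hdens.pos (y i)).le]
    simp only [expPowDensity, Finset.prod_mul_distrib, Finset.prod_const, Finset.card_univ,
      Fintype.card_fin, ← Real.exp_sum, Finset.sum_neg_distrib, powSum]
  have hg : Measurable fun y : EuclideanSpace ℝ (Fin n) => ENNReal.ofReal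
      ((expPowMass p)⁻¹ ^ n * Real.exp (-powSum p y)) :=
    ((continuous_powSum hp.le).measurable.neg.exp.const_mul _).ennreal_ofReal
  rw [pi_withDensity fun _ => hmeas, ← volume_pi,
    ← map_withDensity_comp (PiLp.volume_preserving_toLp (Fin n)) hg]
  simp only [hprod]

theorem powSum_radialMap_le (hp : 0 < p) (hn : n ≠ 0) {r : ℝ} (hr : 0 ≤ r)
    (hrn : (r * expPowMass p) ^ n = Real.Gamma (n / p + 1)) (y : EuclideanSpace ℝ (Fin n)) :
    powSum p (radialMap p y) ≤ r ^ p := by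
  have hZ := expPowMass_pos hp
  set M : ℝ := powSum p y ^ p⁻¹
  have hM : 0 ≤ M := Real.rpow_nonneg (powSum_nonneg p y) _
  have hMp : M ^ p = powSum p y := Real.rpow_inv_rpow (powSum_nonneg p y) hp.ne'
  have hK := radialFactor_pos hp hn (M ^ p)
  have hG := radialMass_nonneg hp.le n 1 hM
  have hfactor : radialFactor n p (M ^ p) * M ≤ r := by
    have hradial := radialFactor_rpow_mul_mul hp hn 1 hM
    rw [mul_one] at hradial
    rw [hradial, div_le_iff₀ hZ, ← Real.pow_rpow_inv_natCast (mul_nonneg hr hZ.le) hn, hrn, one_div]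
    gcongr
    exact mul_radialMass_one_le_Gamma hp hn hM
  rw [radialMap, ← hMp, powSum_smul p hK.le, ← hMp, ← Real.mul_rpow hK.le hM]
  exact Real.rpow_le_rpow (by positivity) hfactor hp.le

end RadialTransport

section LpBall

variable {n : ℕ} {r : ℝ}

theorem smul_lpUnitBall_top (hr : 0 < r) : r • lpUnitBall n ∞ = {x | ∀ i, |x i| ≤ r} := by
  ext x
  simp [lpUnitBall, Set.mem_smul_set_iff_inv_smul_mem₀ hr.ne', abs_mul, abs_of_pos hr,
    inv_mul_le_one₀ hr]

theorem smul_lpUnitBall_of_ne_top {p : ℝ≥0∞} (hp : p ≠ ∞) (hr : 0 < r) :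
    r • lpUnitBall n p = {x | powSum p.toReal x ≤ r ^ p.toReal} := by
  ext x
  have hrp : 0 < r ^ p.toReal := Real.rpow_pos_of_pos hr _
  rw [Set.mem_smul_set_iff_inv_smul_mem₀ hr.ne', lpUnitBall, if_neg hp]
  change powSum p.toReal (r⁻¹ • x) ≤ 1 ↔ powSum p.toReal x ≤ r ^ p.toReal
  rw [powSum_smul _ (inv_pos.2 hr).le, Real.inv_rpow hr.le, inv_mul_le_one₀ hrp]

theorem volume_setOf_powSum_le {p : ℝ} (hp : 1 ≤ p) (hn : n ≠ 0) (hr : 0 ≤ r) :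
    volume {y : EuclideanSpace ℝ (Fin n) | powSum p y ≤ r ^ p} =
      ENNReal.ofReal ((r * expPowMass p) ^ n / Real.Gamma (n / p + 1)) := by
  have : Nonempty (Fin n) := Fin.pos_iff_nonempty.1 (Nat.pos_of_ne_zero hn)
  have hp₀ : 0 < p := by linarith
  have hpre : {y : EuclideanSpace ℝ (Fin n) | powSum p y ≤ r ^ p} =
      WithLp.ofLp ⁻¹' {x : Fin n → ℝ | (∑ i, |x i| ^ p) ^ (1 / p) ≤ r} := by
    ext y
    simp only [Set.mem_preimage, Set.mem_ofPred_eq, one_div]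
    exact (Real.rpow_inv_le_iff_of_pos (powSum_nonneg p y) hr hp₀).symm
  have hofLp : MeasurableEmbedding (WithLp.ofLp : EuclideanSpace ℝ (Fin n) → Fin n → ℝ) :=
    (MeasurableEquiv.toLp 2 (Fin n → ℝ)).symm.measurableEmbedding
  rw [hpre, (PiLp.volume_preserving_ofLp (Fin n)).measure_preimage_emb hofLp,
    volume_sum_rpow_le (Fin n) hp r, Fintype.card_fin, ← ENNReal.ofReal_pow hr,
    ← ENNReal.ofReal_mul (pow_nonneg hr n), ← mul_div_assoc, ← mul_pow, expPowMass]

theorem toLp_preimage_cube (n : ℕ) (r : ℝ) :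
    WithLp.toLp 2 ⁻¹' {x : EuclideanSpace ℝ (Fin n) | ∀ i, |x i| ≤ r} =
      Set.Icc (fun _ => -r) fun _ => r := by
  ext x
  simp only [Set.mem_preimage, Set.mem_ofPred_eq, abs_le, forall_and, Set.mem_Icc, Pi.le_def]

theorem volume_cube (n : ℕ) (hr : 0 ≤ r) :
    volume {x : EuclideanSpace ℝ (Fin n) | ∀ i, |x i| ≤ r} = ENNReal.ofReal ((2 * r) ^ n) := by
  rw [← (PiLp.volume_preserving_toLp (Fin n)).measure_preimage_emb
    (MeasurableEquiv.toLp 2 (Fin n → ℝ)).measurableEmbedding, toLp_preimage_cube,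
    Real.volume_Icc_pi, Finset.prod_const, Finset.card_univ, Fintype.card_fin,
    ← ENNReal.ofReal_pow (by linarith), sub_neg_eq_add, two_mul]

theorem isClosed_cube (n : ℕ) (r : ℝ) :
    IsClosed {x : EuclideanSpace ℝ (Fin n) | ∀ i, |x i| ≤ r} := by
  simp only [Set.ofPred_forall]
  exact isClosed_iInter fun i => isClosed_le (PiLp.continuous_apply 2 _ i).abs continuous_const

end LpBall

theorem measurePreserving_restrict_of_map_le {α β : Type*} [MeasurableSpace α] [MeasurableSpace β]
    {μ : Measure α} [IsProbabilityMeasure μ] {ν : Measure β} {T : α → β} (hT : Measurable T)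
    (hle : μ.map T ≤ ν) {B : Set β} (hB : MeasurableSet B) (hνB : ν B = 1) (hTB : ∀ x, T x ∈ B) :
    MeasurePreserving T μ (ν.restrict B) := by
  have hmap : IsProbabilityMeasure (μ.map T) := Measure.isProbabilityMeasure_map hT.aemeasurable
  have hrestrict : IsProbabilityMeasure (ν.restrict B) := ⟨by rwa [Measure.restrict_apply_univ]⟩
  refine ⟨hT, Measure.eq_of_le_of_isProbabilityMeasure ?_⟩
  rw [← Measure.restrict_eq_self_of_ae_mem
    ((ae_map_iff hT.aemeasurable hB).2 (Eventually.of_forall hTB))]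
  exact Measure.restrict_mono subset_rfl hle

section GaussianTransport

local notation "φ" => ProbabilityTheory.gaussianPDFReal 0 1

theorem measurePreserving_coordMap_half_sub_tailMass (n : ℕ) :
    MeasurePreserving (coordMap fun t => 1 / 2 - tailMass φ t) (stdGaussian n)
      (volume.restrict {x | ∀ i, |x i| ≤ 1 / 2}) := by
  have hcdf : MeasurePreserving (fun t => 1 / 2 - tailMass φ t)
      (ProbabilityTheory.gaussianReal 0 1) (volume.restrict (Set.Icc (-1 / 2) (1 / 2))) := by
    rw [ProbabilityTheory.gaussianReal_of_var_ne_zero 0 one_ne_zero]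
    exact isSymmDensity_gaussianPDFReal.measurePreserving_half_sub_tailMass
  convert! measurePreserving_coordMap_stdGaussian (n := n) hcdf using 1
  rw [← Measure.restrict_pi_pi, ← volume_pi, Set.pi_univ_Icc, neg_div, ← toLp_preimage_cube,
    ((PiLp.volume_preserving_toLp (Fin n)).restrict_preimage
      (isClosed_cube n _).measurableSet).map_eq]

theorem gaussianPDFReal_le_one (t : ℝ) : φ t ≤ 1 := by
  have hexp : Real.exp (-t ^ 2 / 2) ≤ 1 := Real.exp_le_one_iff.2 (by linarith [sq_nonneg t])
  linarith [gaussianPDFReal_le t]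

theorem lipschitzWith_coordMap_half_sub_tailMass (n : ℕ) :
    LipschitzWith 1 (coordMap fun t => 1 / 2 - tailMass φ t :
      EuclideanSpace ℝ (Fin n) → EuclideanSpace ℝ (Fin n)) := by
  have hφ := isSymmDensity_gaussianPDFReal
  refine LipschitzWith.of_dist_le_mul fun x y => ?_
  rw [dist_eq_norm, dist_eq_norm, NNReal.coe_one]
  refine norm_coordMap_sub_le (fun s t => ?_) x y
  rw [_root_.sub_sub_sub_cancel_left, abs_sub_comm]
  exact abs_tailMass_sub_le hφ.integrable (fun t => (hφ.pos t).le) gaussianPDFReal_le_one s t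

theorem abs_half_sub_tailMass_le (t : ℝ) : |1 / 2 - tailMass φ t| ≤ 1 / 2 := by
  have hmem : tailMass φ t ∈ Set.Ioo 0 1 :=
    isSymmDensity_gaussianPDFReal.range_tailMass ▸ Set.mem_range_self t
  exact abs_le.2 ⟨by linarith [hmem.2], by linarith [hmem.1]⟩

variable {n : ℕ}

theorem isProbabilityMeasure_stdGaussian (n : ℕ) : IsProbabilityMeasure (stdGaussian n) := by
  have hmap := (measurePreserving_ofLp_stdGaussian n).map_eq
  have : IsProbabilityMeasure ((stdGaussian n).map WithLp.ofLp) := by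
    rw [hmap]
    infer_instance
  exact Measure.isProbabilityMeasure_of_map WithLp.ofLp

theorem measurePreserving_radialMap_comp_coordMap_expPowMap {p : ℝ} (hp : 0 < p) (hn : n ≠ 0)
    {B : Set (EuclideanSpace ℝ (Fin n))} (hB : MeasurableSet B) (hvol : volume B = 1)
    (hmem : ∀ y, radialMap p y ∈ B) :
    MeasurePreserving (radialMap p ∘ coordMap (expPowMap p)) (stdGaussian n)
      (volume.restrict B) := by
  have hw := measurePreserving_expPowMap hp
  have : IsProbabilityMeasure (volume.withDensity fun y => ENNReal.ofReal (expPowDensity p y)) := by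
    rw [← hw.map_eq]
    exact Measure.isProbabilityMeasure_map hw.aemeasurable
  have hcoord := measurePreserving_coordMap_stdGaussian (n := n) hw
  have hT := measurable_radialMap (n := n) hp
  have := isProbabilityMeasure_stdGaussian n
  refine measurePreserving_restrict_of_map_le (hT.comp hcoord.measurable) ?_ hB hvol
    fun x => hmem _
  rw [← Measure.map_map hT hcoord.measurable, hcoord.map_eq,
    map_toLp_pi_withDensity_expPowDensity hp]
  exact map_radialMap_withDensity_le hp hn

theorem exists_lipschitzWith_measurePreserving_smul_lpUnitBall {p : ℝ≥0∞} (hp : 2 ≤ p) (hn : n ≠ 0)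
    {r : ℝ} (hr : 0 < r) (hvol : volume (r • lpUnitBall n p) = 1) :
    ∃ S : EuclideanSpace ℝ (Fin n) → EuclideanSpace ℝ (Fin n), LipschitzWith 14 S ∧
      MeasurePreserving S (stdGaussian n) (volume.restrict (r • lpUnitBall n p)) ∧
      ∀ x, S x ∈ r • lpUnitBall n p := by
  rcases eq_or_ne p ∞ with rfl | hp_top
  · rw [smul_lpUnitBall_top hr] at hvol ⊢
    have hr_half : r = 1 / 2 := by
      rw [volume_cube n hr.le, ENNReal.ofReal_eq_one, pow_eq_one_iff_of_nonneg (by positivity) hn]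
        at hvol
      linarith
    subst hr_half
    exact ⟨_, (lipschitzWith_coordMap_half_sub_tailMass n).weaken (by norm_num),
      measurePreserving_coordMap_half_sub_tailMass n, fun x i => abs_half_sub_tailMass_le (x i)⟩
  · have hp_real : 2 ≤ p.toReal := by simpa using ENNReal.toReal_mono hp_top hp
    have hp_pos : 0 < p.toReal := by linarith
    rw [smul_lpUnitBall_of_ne_top hp_top hr] at hvol ⊢
    have hΓ : 0 < Real.Gamma (n / p.toReal + 1) := Real.Gamma_pos_of_pos (by positivity)
    have hrn : (r * expPowMass p.toReal) ^ n = Real.Gamma (n / p.toReal + 1) := by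
      rwa [volume_setOf_powSum_le (by linarith) hn hr.le, ENNReal.ofReal_eq_one,
        div_eq_one_iff_eq hΓ.ne'] at hvol
    have hmem (y : EuclideanSpace ℝ (Fin n)) :
        radialMap p.toReal y ∈ {y | powSum p.toReal y ≤ r ^ p.toReal} :=
      powSum_radialMap_le hp_pos hn hr.le hrn y
    have hclosed : IsClosed {y : EuclideanSpace ℝ (Fin n) | powSum p.toReal y ≤ r ^ p.toReal} :=
      isClosed_le (continuous_powSum hp_pos.le) continuous_const
    exact ⟨_, lipschitzWith_radialMap_comp_coordMap_expPowMap hp_real hn,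
      measurePreserving_radialMap_comp_coordMap_expPowMap hp_pos hn hclosed.measurableSet hvol hmem,
      fun x => hmem _⟩

end GaussianTransport

theorem spectral_comparison_lp_ball_general
    (n : ℕ) (hn : 1 ≤ n) (p : ℝ≥0∞) (hp : 2 ≤ p)
    (r : ℝ) (hr : 0 < r)
    (B : Set (EuclideanSpace ℝ (Fin n)))
    (hB : B = r • lpUnitBall n p)
    (hvol : volume B = 1)
    (k : ℕ) (hk : 1 ≤ k) :
    (1 / 196 : ℝ) * lambdaLip (stdGaussian n) k ≤
      lambdaLip (Measure.comap (Subtype.val : B → EuclideanSpace ℝ (Fin n)) volume) k := by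
  subst hB
  have hn₀ : n ≠ 0 := by lia
  have : Nonempty (Fin n) := ⟨⟨0, hn⟩⟩
  have hp₁ : 1 ≤ p := one_le_two.trans hp
  obtain ⟨S, hLip, hpres, hmem⟩ :=
    exists_lipschitzWith_measurePreserving_smul_lpUnitBall hp hn₀ hr hvol
  have hcomparison := lambdaLip_le_sq_mul_of_convex ((convex_lpUnitBall hp₁).smul r)
    ((isCompact_lpUnitBall hp₁).smul r) (by rw [hvol]; exact one_ne_zero) hLip hpres hmem hk
  norm_num at hcomparison
  linarith

/-- **Spectral comparison for the (volume-normalized) unit ball of `ℓ_pⁿ`, `p ∈ [2,∞]`**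
(Latała–Wojtaszczyk + Contraction Principle): denoting by `B̃_pⁿ` the unit ball of
`ℓ_pⁿ` rescaled by a homothety to have Lebesgue volume `1`, endowed with the Euclidean
distance and the uniform (Lebesgue) probability measure, one has
`λ_k^Lip(B̃_pⁿ,|·|,λ_{B̃_pⁿ}) ≥ (1/392)·λ_k^Lip(ℝⁿ,|·|,γⁿ)` for all `k ≥ 1`. -/
theorem spectral_comparison_lp_ball
    (n : ℕ) (hn : 1 ≤ n) (p : ℝ≥0∞) (hp : 2 ≤ p)
    (r : ℝ) (hr : 0 < r)
    (B : Set (EuclideanSpace ℝ (Fin n)))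
    (hB : B = r • lpUnitBall n p)
    (hvol : volume B = 1)
    (k : ℕ) (hk : 1 ≤ k) :
    (1 / 392 : ℝ) * lambdaLip (stdGaussian n) k ≤
      lambdaLip (Measure.comap (Subtype.val : B → EuclideanSpace ℝ (Fin n)) volume) k := by
  linarith [spectral_comparison_lp_ball_general n hn p hp r hr B hB hvol k hk,
    lambdaLip_nonneg (stdGaussian n) k]
end

section
/- Let μ₁, μ₂ be probability measures on ℝ with continuous, everywhere positive densities f_{μ₁}, f_{μ₂} with respect to Lebesgue measure, and let T := F_{μ₂}^{−1} ∘ F_{μ₁} : ℝ → ℝ be the increasing monotone transport map. Then T pushes forward μ₁ onto μ₂ (i.e. T_*μ₁ = μ₂), and for every L > 0: if 𝓘♭_{μ₂}(v) ≥ (1/L)·𝓘♭_{μ₁}(v) for all v ∈ (0,1), then T is L-Lipschitz. -/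
open MeasureTheory Filter Topology ENNReal

/-- The cumulative distribution function `F_μ(x) = μ((-∞,x])` of a measure on `ℝ`. -/
noncomputable def cdf (μ : Measure ℝ) : ℝ → ℝ := fun x => (μ (Set.Iic x)).toReal

/-- The one-sided flat isoperimetric profile `𝓘♭_μ = f_μ ∘ F_μ⁻¹` of a measure on `ℝ`
with density `f` (here `F_μ⁻¹` is interpreted via `Function.invFun`). -/
noncomputable def flatIsopProfile (μ : Measure ℝ) (f : ℝ → ℝ) : ℝ → ℝ :=
  fun v => f (Function.invFun (cdf μ) v)

/-
Both measures are atomless and charge every nonempty open set, so their distribution functions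
are increasing bijections from `ℝ` onto `(0, 1)` and `T` is increasing with `F_{μ₂} ∘ T = F_{μ₁}`;
this identity is the pushforward statement on half-lines.

At the level `v = F_{μ₁}(x)` the profile inequality reads `f₁(x) ≤ L f₂(T x)`. Integrating `1 / f₂`
against `μ₂ = T_* μ₁` recovers Lebesgue measure, so no derivative of `T` is needed: for `x < y`,
`T y - T x = ∫_{(Tx, Ty)} (1 / f₂) dμ₂ = ∫_{T⁻¹(Tx, Ty)} f₁ / (f₂ ∘ T) ≤ L (y - x)`.
-/

theorem isOpenPosMeasure_withDensity {X : Type*} [TopologicalSpace X] [MeasurableSpace X]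
    {μ : Measure X} [μ.IsOpenPosMeasure] {f : X → ℝ≥0∞} (hf : AEMeasurable f μ)
    (hf_ne_zero : ∀ᵐ x ∂μ, f x ≠ 0) : (μ.withDensity f).IsOpenPosMeasure :=
  (withDensity_absolutelyContinuous' hf hf_ne_zero).isOpenPosMeasure

theorem le_smul_map_of_measurePreserving_withDensity {α β : Type*}
    [MeasurableSpace α] [MeasurableSpace β] {μ : Measure α} {ν : Measure β}
    {f : α → ℝ≥0∞} {g : β → ℝ≥0∞} {T : α → β} {c : ℝ≥0∞}
    (hT : MeasurePreserving T (μ.withDensity f) (ν.withDensity g))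
    (hf : AEMeasurable f μ) (hg : AEMeasurable g ν)
    (hg_ne_zero : ∀ᵐ y ∂ν, g y ≠ 0) (hg_ne_top : ∀ᵐ y ∂ν, g y ≠ ∞)
    (hfg : ∀ᵐ x ∂μ, f x ≤ c * g (T x)) :
    ν ≤ c • μ.map T := by
  have hg_inv : AEMeasurable (fun y => (g y)⁻¹) (ν.withDensity g) :=
    hg.fun_inv.mono_ac (withDensity_absolutelyContinuous ν g)
  have hgT_inv : AEMeasurable (fun x => (g (T x))⁻¹) (μ.withDensity f) :=
    hg_inv.comp_quasiMeasurePreserving hT.quasiMeasurePreserving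
  refine Measure.le_iff.2 fun s hs => ?_
  have hTs := hT.restrict_preimage hs
  calc ν s = ((ν.withDensity g).withDensity fun y => (g y)⁻¹) s := by
        rw [withDensity_inv_same₀ hg hg_ne_zero hg_ne_top]
    _ = ∫⁻ y in s, (g y)⁻¹ ∂ν.withDensity g := withDensity_apply _ hs
    _ = ∫⁻ x in T ⁻¹' s, (g (T x))⁻¹ ∂μ.withDensity f := by
        rw [← hTs.map_eq]
        exact lintegral_map' (hTs.map_eq ▸ hg_inv.restrict) hT.measurable.aemeasurable
    _ = ∫⁻ x in T ⁻¹' s, f x / g (T x) ∂μ :=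
        setLIntegral_withDensity_eq_lintegral_mul₀' hf hgT_inv (hT.measurable hs)
    _ ≤ ∫⁻ _ in T ⁻¹' s, c ∂μ :=
        lintegral_mono_ae <| ae_restrict_of_ae <| hfg.mono fun _ => ENNReal.div_le_of_le_mul
    _ = (c • μ.map T) s := by
        rw [setLIntegral_const, Measure.smul_apply, Measure.map_apply hT.measurable hs,
          smul_eq_mul]

theorem lipschitzWith_of_monotone_of_volume_le_smul_map {T : ℝ → ℝ} {K : NNReal} (hT : Monotone T)
    (hvol : volume ≤ (K : ℝ≥0∞) • volume.map T) : LipschitzWith K T := by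
  refine LipschitzWith.of_le_add_mul K fun x y => ?_
  rcases le_total x y with hxy | hyx
  · exact (hT hxy).trans (le_add_of_nonneg_right (by positivity))
  have hpre : T ⁻¹' Set.Ioo (T y) (T x) ⊆ Set.Ioo y x :=
    fun z hz => ⟨hT.reflect_lt hz.1, hT.reflect_lt hz.2⟩
  have hle : ENNReal.ofReal (T x - T y) ≤ ENNReal.ofReal (K * (x - y)) := calc
    ENNReal.ofReal (T x - T y) = volume (Set.Ioo (T y) (T x)) := Real.volume_Ioo.symm
    _ ≤ K * volume (T ⁻¹' Set.Ioo (T y) (T x)) := by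
        simpa only [Measure.smul_apply, smul_eq_mul, Measure.map_apply hT.measurable
          measurableSet_Ioo] using hvol (Set.Ioo (T y) (T x))
    _ ≤ K * volume (Set.Ioo y x) := by gcongr
    _ = ENNReal.ofReal (K * (x - y)) := by
        rw [Real.volume_Ioo, ENNReal.ofReal_mul K.coe_nonneg, ENNReal.ofReal_coe_nnreal]
  have hKxy : 0 ≤ K * (x - y) := mul_nonneg K.coe_nonneg (sub_nonneg.2 hyx)
  rw [Real.dist_eq, abs_of_nonneg (sub_nonneg.2 hyx), ← sub_le_iff_le_add']
  exact (ENNReal.ofReal_le_ofReal_iff hKxy).1 hle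

section Cdf

variable (μ : Measure ℝ) [IsProbabilityMeasure μ]

theorem cdf_eq_probabilityTheory_cdf : cdf μ = ProbabilityTheory.cdf μ :=
  funext fun x => (ProbabilityTheory.cdf_eq_real μ x).symm

theorem continuous_cdf [NullSingletonClass μ] : Continuous (cdf μ) := by
  rw [cdf_eq_probabilityTheory_cdf]
  set F := ProbabilityTheory.cdf μ
  refine continuous_iff_continuousAt.2 fun x => ?_
  have hjump : ENNReal.ofReal (F x - Function.leftLim F x) = 0 := by
    rw [← F.measure_singleton, ProbabilityTheory.measure_cdf, measure_singleton]
  rw [F.mono.continuousAt_iff_leftLim_eq_rightLim, F.rightLim_eq]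
  exact (F.mono.leftLim_le le_rfl).antisymm (sub_nonpos.1 (ENNReal.ofReal_eq_zero.1 hjump))

theorem strictMono_cdf [μ.IsOpenPosMeasure] : StrictMono (cdf μ) := by
  intro x y hxy
  have hpos : 0 < μ (Set.Ioc x y) :=
    ((Measure.measure_Ioo_pos μ).2 hxy).trans_le (measure_mono Set.Ioo_subset_Ioc_self)
  rwa [← ProbabilityTheory.measure_cdf μ, StieltjesFunction.measure_Ioc, ENNReal.ofReal_pos,
    sub_pos, ← cdf_eq_probabilityTheory_cdf] at hpos

theorem cdf_mem_Ioo [μ.IsOpenPosMeasure] (x : ℝ) : cdf μ x ∈ Set.Ioo (0 : ℝ) 1 := by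
  have hF := strictMono_cdf μ
  constructor
  · calc 0 ≤ cdf μ (x - 1) := ENNReal.toReal_nonneg
      _ < cdf μ x := hF (sub_one_lt x)
  · calc cdf μ x < cdf μ (x + 1) := hF (lt_add_one x)
      _ ≤ 1 := measureReal_le_one

theorem Ioo_subset_range_cdf [NullSingletonClass μ] : Set.Ioo (0 : ℝ) 1 ⊆ Set.range (cdf μ) := by
  intro v hv
  have hbot : Tendsto (cdf μ) atBot (𝓝 0) :=
    cdf_eq_probabilityTheory_cdf μ ▸ ProbabilityTheory.tendsto_cdf_atBot μ
  have htop : Tendsto (cdf μ) atTop (𝓝 1) :=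
    cdf_eq_probabilityTheory_cdf μ ▸ ProbabilityTheory.tendsto_cdf_atTop μ
  exact mem_range_of_exists_le_of_exists_ge (continuous_cdf μ)
    (hbot.eventually_le_const hv.1).exists (htop.eventually_const_le hv.2).exists

theorem flatIsopProfile_cdf [μ.IsOpenPosMeasure] (f : ℝ → ℝ) (x : ℝ) :
    flatIsopProfile μ f (cdf μ x) = f x :=
  congrArg f (Function.leftInverse_invFun (strictMono_cdf μ).injective x)

end Cdf

/-- The increasing transport map `F_ν⁻¹ ∘ F_μ` from `μ` to `ν`. As in `flatIsopProfile`, the inverse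
is `Function.invFun`, which is a genuine inverse only on the range of `cdf ν`. -/
noncomputable def monotoneTransport (μ ν : Measure ℝ) : ℝ → ℝ :=
  fun x => Function.invFun (cdf ν) (cdf μ x)

theorem flatIsopProfile_cdf_eq_monotoneTransport (μ ν : Measure ℝ) (g : ℝ → ℝ) (x : ℝ) :
    flatIsopProfile ν g (cdf μ x) = g (monotoneTransport μ ν x) :=
  rfl

theorem le_mul_comp_monotoneTransport_of_flatIsopProfile_le {μ ν : Measure ℝ}
    [IsProbabilityMeasure μ] [μ.IsOpenPosMeasure] {f g : ℝ → ℝ} {L : ℝ} (hL : 0 < L)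
    (hprofile : ∀ v ∈ Set.Ioo (0 : ℝ) 1,
      (1 / L) * flatIsopProfile μ f v ≤ flatIsopProfile ν g v) (x : ℝ) :
    f x ≤ L * g (monotoneTransport μ ν x) := by
  have hx := hprofile (cdf μ x) (cdf_mem_Ioo μ x)
  rwa [flatIsopProfile_cdf, flatIsopProfile_cdf_eq_monotoneTransport, one_div,
    inv_mul_le_iff₀ hL] at hx

section MonotoneTransport

variable (μ ν : Measure ℝ) [IsProbabilityMeasure μ] [IsProbabilityMeasure ν]
  [μ.IsOpenPosMeasure] [NullSingletonClass ν]

theorem cdf_monotoneTransport (x : ℝ) : cdf ν (monotoneTransport μ ν x) = cdf μ x :=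
  Function.invFun_eq (Ioo_subset_range_cdf ν (cdf_mem_Ioo μ x))

theorem strictMono_monotoneTransport : StrictMono (monotoneTransport μ ν) := by
  intro x y hxy
  have hν : Monotone (cdf ν) :=
    cdf_eq_probabilityTheory_cdf ν ▸ ProbabilityTheory.monotone_cdf ν
  refine hν.reflect_lt ?_
  rw [cdf_monotoneTransport, cdf_monotoneTransport]
  exact strictMono_cdf μ hxy

theorem surjective_monotoneTransport [NullSingletonClass μ] [ν.IsOpenPosMeasure] :
    Function.Surjective (monotoneTransport μ ν) := by
  intro y
  obtain ⟨x, hx⟩ := Ioo_subset_range_cdf μ (cdf_mem_Ioo ν y)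
  exact ⟨x, (strictMono_cdf ν).injective ((cdf_monotoneTransport μ ν x).trans hx)⟩

theorem measurePreserving_monotoneTransport [NullSingletonClass μ] [ν.IsOpenPosMeasure] :
    MeasurePreserving (monotoneTransport μ ν) μ ν := by
  have hT := strictMono_monotoneTransport μ ν
  have hTm : Measurable (monotoneTransport μ ν) := hT.monotone.measurable
  have := Measure.isProbabilityMeasure_map (μ := μ) hTm.aemeasurable
  refine ⟨hTm, Measure.ext_of_Iic _ _ fun a => ?_⟩
  obtain ⟨b, rfl⟩ := surjective_monotoneTransport μ ν a
  have hpre : monotoneTransport μ ν ⁻¹' Set.Iic (monotoneTransport μ ν b) = Set.Iic b :=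
    Set.ext fun _ => hT.le_iff_le
  rw [Measure.map_apply hTm measurableSet_Iic, hpre,
    ← ENNReal.toReal_eq_toReal_iff' (measure_ne_top _ _) (measure_ne_top _ _)]
  exact (cdf_monotoneTransport μ ν b).symm

end MonotoneTransport

theorem monotone_transport_lipschitz_general
    (f₁ f₂ : ℝ → ℝ) (hf₁m : AEMeasurable f₁) (hf₂m : AEMeasurable f₂)
    (hf₁pos : ∀ᵐ x, 0 < f₁ x) (hf₂pos : ∀ᵐ x, 0 < f₂ x)
    (μ₁ μ₂ : Measure ℝ)
    (hμ₁ : μ₁ = volume.withDensity fun x => ENNReal.ofReal (f₁ x))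
    (hμ₂ : μ₂ = volume.withDensity fun x => ENNReal.ofReal (f₂ x))
    [IsProbabilityMeasure μ₁] [IsProbabilityMeasure μ₂] :
    Measure.map (monotoneTransport μ₁ μ₂) μ₁ = μ₂ ∧
      ∀ L : ℝ, 0 < L →
        (∀ v ∈ Set.Ioo (0 : ℝ) 1,
          (1 / L) * flatIsopProfile μ₁ f₁ v ≤ flatIsopProfile μ₂ f₂ v) →
        ∀ x y : ℝ, |monotoneTransport μ₁ μ₂ x - monotoneTransport μ₁ μ₂ y| ≤ L * |x - y| := by
  have hf₂_ne_zero : ∀ᵐ x, ENNReal.ofReal (f₂ x) ≠ 0 :=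
    hf₂pos.mono fun _ hx => (ENNReal.ofReal_pos.2 hx).ne'
  have : NullSingletonClass μ₁ := hμ₁ ▸ inferInstance
  have : NullSingletonClass μ₂ := hμ₂ ▸ inferInstance
  have : μ₁.IsOpenPosMeasure := hμ₁ ▸ isOpenPosMeasure_withDensity hf₁m.ennreal_ofReal
    (hf₁pos.mono fun _ hx => (ENNReal.ofReal_pos.2 hx).ne')
  have : μ₂.IsOpenPosMeasure := hμ₂ ▸ isOpenPosMeasure_withDensity hf₂m.ennreal_ofReal hf₂_ne_zero
  have hT := measurePreserving_monotoneTransport μ₁ μ₂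
  refine ⟨hT.map_eq, fun L hL hprofile => ?_⟩
  lift L to NNReal using hL.le
  have hvol : volume ≤ (L : ℝ≥0∞) • volume.map (monotoneTransport μ₁ μ₂) := by
    refine le_smul_map_of_measurePreserving_withDensity
      (f := fun x => ENNReal.ofReal (f₁ x)) (g := fun x => ENNReal.ofReal (f₂ x))
      (by rwa [← hμ₁, ← hμ₂]) hf₁m.ennreal_ofReal hf₂m.ennreal_ofReal hf₂_ne_zero
      (ae_of_all _ fun _ => ENNReal.ofReal_ne_top) (ae_of_all _ fun x => ?_)
    rw [← ENNReal.ofReal_coe_nnreal, ← ENNReal.ofReal_mul L.coe_nonneg]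
    exact ENNReal.ofReal_le_ofReal
      (le_mul_comp_monotoneTransport_of_flatIsopProfile_le hL hprofile x)
  exact (lipschitzWith_of_monotone_of_volume_le_smul_map
    (strictMono_monotoneTransport μ₁ μ₂).monotone hvol).dist_le_mul

/-- **The increasing monotone transport map** (Bobkov–Houdré): for probability measures
`μ₁, μ₂` on `ℝ` with continuous positive densities, the map `T = F_{μ₂}⁻¹ ∘ F_{μ₁}`
pushes `μ₁` forward onto `μ₂`, and if `𝓘♭_{μ₂} ≥ (1/L)·𝓘♭_{μ₁}` on `(0,1)` then `T`
is `L`-Lipschitz. -/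
theorem monotone_transport_lipschitz
    (f₁ f₂ : ℝ → ℝ) (hf₁c : Continuous f₁) (hf₂c : Continuous f₂)
    (hf₁pos : ∀ x, 0 < f₁ x) (hf₂pos : ∀ x, 0 < f₂ x)
    (μ₁ μ₂ : Measure ℝ)
    (hμ₁ : μ₁ = volume.withDensity fun x => ENNReal.ofReal (f₁ x))
    (hμ₂ : μ₂ = volume.withDensity fun x => ENNReal.ofReal (f₂ x))
    [IsProbabilityMeasure μ₁] [IsProbabilityMeasure μ₂]
    (T : ℝ → ℝ) (hT : T = fun x => Function.invFun (cdf μ₂) (cdf μ₁ x)) :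
    Measure.map T μ₁ = μ₂ ∧
      ∀ L : ℝ, 0 < L →
        (∀ v ∈ Set.Ioo (0 : ℝ) 1,
          (1 / L) * flatIsopProfile μ₁ f₁ v ≤ flatIsopProfile μ₂ f₂ v) →
        ∀ x y : ℝ, |T x - T y| ≤ L * |x - y| := by
  subst hT
  exact monotone_transport_lipschitz_general f₁ f₂ hf₁c.aemeasurable hf₂c.aemeasurable
    (ae_of_all _ hf₁pos) (ae_of_all _ hf₂pos) μ₁ μ₂ hμ₁ hμ₂
end
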